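/- Let $d = 3$ and let $Y_1, \dots, Y_N$ be independent Markovian flight processes in $\mathbb{R}^d$ started at the origin with deterministic initial unit velocities $v_1, \dots, v_N$, i.e., each $Y_j$ moves with unit speed along straight segments whose lengths are i.i.d. EXP(1) and whose directions after the first are i.i.d. uniform on $S^{d-1}$. Let $w := 2 \min_{i < j} \arcsin\sqrt{(1 - v_i \cdot v_j)/2}$ be the minimal angle between initial velocities, and for $r \in (0,1]$, $T \ge 1$ with $rT \le 1$ let $\sigma$ be the first time one of the trajectories comes within distance $2r$ of a previous scattering point of any of the trajectories (of itself at a non-adjacent scattering, or of another trajectory). Then there is a universal constant $C < \infty$ with $\mathbb{P}(\sigma < T) \le C r (N T + N^2 w^{-1})$. -/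

import Mathlib

open MeasureTheory ProbabilityTheory Real
open scoped ENNReal InnerProductSpace

/-- Time of the `k`-th scattering of a flight process with flight lengths `ξ`. -/
noncomputable def flightTheta {Ω : Type*} (ξ : ℕ → Ω → ℝ) (k : ℕ) (ω : Ω) : ℝ :=
  ∑ l ∈ Finset.range k, ξ l ω

/-- Position at the `k`-th scattering of the flight process with flight lengths `ξ` and
flight velocities `U`. -/
noncomputable def flightPos {Ω E : Type*} [AddCommMonoid E] [Module ℝ E]
    (ξ : ℕ → Ω → ℝ) (U : ℕ → Ω → E) (k : ℕ) (ω : Ω) : E :=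
  ∑ l ∈ Finset.range k, ξ l ω • U l ω

/-- Position of the flight process at (continuous) time `t`. -/
noncomputable def flightTraj {Ω E : Type*} [AddCommMonoid E] [Module ℝ E]
    (ξ : ℕ → Ω → ℝ) (U : ℕ → Ω → E) (t : ℝ) (ω : Ω) : E :=
  flightPos ξ U (sSup {k : ℕ | flightTheta ξ k ω ≤ t}) ω +
    (t - flightTheta ξ (sSup {k : ℕ | flightTheta ξ k ω ≤ t}) ω) •
      U (sSup {k : ℕ | flightTheta ξ k ω ≤ t}) ω

/-- First time one of `N` flight trajectories comes within distance `2r` of a previous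
scattering point of any of the trajectories (of itself at a non-adjacent scattering, or of
another trajectory). -/
noncomputable def mismatchTime {Ω E : Type*} [NormedAddCommGroup E] [NormedSpace ℝ E]
    (N : ℕ) (ξ : Fin N → ℕ → Ω → ℝ) (U : Fin N → ℕ → Ω → E) (r : ℝ) (ω : Ω) : ℝ :=
  sInf {t : ℝ | 0 < t ∧ ∃ i j : Fin N, ∃ k : ℕ, 1 ≤ k ∧
    flightTheta (ξ j) k ω ≤ t ∧
    ∃ s : ℝ, 0 ≤ s ∧ s ≤ t ∧
      ‖flightTraj (ξ i) (U i) s ω - flightPos (ξ j) (U j) k ω‖ < 2 * r ∧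
      (i = j → (s < flightTheta (ξ j) (k - 1) ω ∨ flightTheta (ξ j) (k + 1) ω < s))}

open MeasureTheory ProbabilityTheory Real
open scoped ENNReal InnerProductSpace

abbrev E3 := EuclideanSpace ℝ (Fin 3)

lemma exists_isom (u v : E3) (h : ‖u‖ = ‖v‖) : ∃ R : E3 ≃ₗᵢ[ℝ] E3, R u = v :=
  ⟨_, Submodule.reflection_sub h⟩

/-- rotation-invariant averages of functions of inner product agree with ball averages -/
lemma ball_trick (μS : Measure E3) [IsProbabilityMeasure μS]
    (hS : μS (Metric.sphere (0 : E3) 1)ᶜ = 0)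
    (hR : ∀ R : E3 ≃ₗᵢ[ℝ] E3, μS.map R = μS)
    (F : ℝ → ℝ≥0∞) (hF : Measurable F) (v e : E3) (hv : ‖v‖ = 1) (he : ‖e‖ = 1) :
    volume (Metric.ball (0 : E3) 1) * ∫⁻ u, F ⟪v, u⟫_ℝ ∂μS
      = ∫⁻ x in Metric.ball (0 : E3) 1, F (⟪x, e⟫_ℝ / ‖x‖) := by
  have h1 : ∀ x : E3, x ≠ 0 → ∫⁻ u, F (⟪x, u⟫_ℝ / ‖x‖) ∂μS = ∫⁻ u, F ⟪v, u⟫_ℝ ∂μS := by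
    intro x hx
    obtain ⟨R, hRv⟩ := exists_isom v (‖x‖⁻¹ • x) (by
      rw [hv, norm_smul, norm_inv, norm_norm, inv_mul_cancel₀ (norm_ne_zero_iff.mpr hx)])
    conv_lhs => rw [← hR R]
    rw [lintegral_map (by fun_prop) R.continuous.measurable]
    congr with u
    congr 1
    have : x = ‖x‖ • R v := by
      rw [hRv, smul_smul, mul_inv_cancel₀ (norm_ne_zero_iff.mpr hx), one_smul]
    conv_lhs => rw [this]
    rw [inner_smul_left, R.inner_map_map, norm_smul, R.norm_map, hv]
    simp [hx]
  have h2 : ∀ u : E3, ‖u‖ = 1 → ∫⁻ x in Metric.ball (0 : E3) 1, F (⟪x, u⟫_ℝ / ‖x‖)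
      = ∫⁻ x in Metric.ball (0 : E3) 1, F (⟪x, e⟫_ℝ / ‖x‖) := by
    intro u hu
    obtain ⟨R, hRv⟩ := exists_isom e u (by rw [hu, he])
    have hp := R.measurePreserving.setLIntegral_comp_preimage (s := Metric.ball (0 : E3) 1)
      (f := fun x => F (⟪x, u⟫_ℝ / ‖x‖)) Metric.isOpen_ball.measurableSet (by fun_prop)
    rw [← hp]
    have : R ⁻¹' Metric.ball 0 1 = Metric.ball 0 1 := by
      ext x; simp
    rw [this]
    congr with x
    rw [← hRv, R.inner_map_map, R.norm_map]
  have hae : ∀ᵐ u ∂μS, ‖u‖ = 1 := by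
    rw [ae_iff]; convert hS using 2; ext x; simp
  calc volume (Metric.ball (0 : E3) 1) * ∫⁻ u, F ⟪v, u⟫_ℝ ∂μS
      = ∫⁻ x in Metric.ball (0 : E3) 1, ∫⁻ u, F ⟪v, u⟫_ℝ ∂μS := by
        rw [setLIntegral_const, mul_comm]
    _ = ∫⁻ x in Metric.ball (0 : E3) 1, ∫⁻ u, F (⟪x, u⟫_ℝ / ‖x‖) ∂μS := by
        apply lintegral_congr_ae
        apply ae_restrict_of_ae
        have : ∀ᵐ x : E3, x ≠ 0 := by simp [ae_iff]
        filter_upwards [this] with x hx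
        rw [h1 x hx]
    _ = ∫⁻ u, (∫⁻ x in Metric.ball (0 : E3) 1, F (⟪x, u⟫_ℝ / ‖x‖)) ∂μS := by
        rw [lintegral_lintegral_swap]
        apply Measurable.aemeasurable
        fun_prop
    _ = ∫⁻ u, (∫⁻ x in Metric.ball (0 : E3) 1, F (⟪x, e⟫_ℝ / ‖x‖)) ∂μS := by
        apply lintegral_congr_ae
        filter_upwards [hae] with u hu using h2 u hu
    _ = _ := by simp

lemma lint_prod3 (f0 f1 f2 : ℝ → ℝ) (h0 : Integrable f0) (h1 : Integrable f1)
    (h2 : Integrable f2) (n0 : ∀ x, 0 ≤ f0 x) (n1 : ∀ x, 0 ≤ f1 x) (n2 : ∀ x, 0 ≤ f2 x) :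
    ∫⁻ x : E3, ENNReal.ofReal (f0 (x 0) * f1 (x 1) * f2 (x 2))
      = ENNReal.ofReal ((∫ x, f0 x) * (∫ x, f1 x) * (∫ x, f2 x)) := by
  have hp := (EuclideanSpace.volume_preserving_symm_measurableEquiv_toLp (Fin 3))
  have hi : Integrable (fun x : Fin 3 → ℝ => ∏ i, (![f0, f1, f2] i) (x i)) := by
    apply Integrable.fintype_prod
    intro i; fin_cases i <;> simpa
  have := hp.lintegral_comp_emb (MeasurableEquiv.measurableEmbedding _)
    (fun x : Fin 3 → ℝ => ENNReal.ofReal (∏ i, (![f0, f1, f2] i) (x i)))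
  rw [← ofReal_integral_eq_lintegral_ofReal hi, integral_fintype_prod_volume_eq_prod] at this
  · simpa [Fin.prod_univ_three] using this
  · refine Filter.Eventually.of_forall fun x => ?_
    apply Finset.prod_nonneg
    intro i _; fin_cases i <;> simp [*]

/-- reciprocal volume of unit ball -/
noncomputable def kB : ℝ := ((volume (Metric.ball (0 : E3) 1)).toReal)⁻¹

lemma kB_pos : 0 < kB := by
  unfold kB
  apply inv_pos.mpr
  apply ENNReal.toReal_pos (Metric.measure_ball_pos _ _ one_pos).ne' measure_ball_lt_top.ne

lemma ball_bound (μS : Measure E3) [IsProbabilityMeasure μS]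
    (hS : μS (Metric.sphere (0 : E3) 1)ᶜ = 0)
    (hR : ∀ R : E3 ≃ₗᵢ[ℝ] E3, μS.map R = μS)
    (F : ℝ → ℝ≥0∞) (hF : Measurable F) (v : E3) (hv : ‖v‖ = 1)
    (f0 f1 f2 : ℝ → ℝ) (h0 : Integrable f0) (h1 : Integrable f1)
    (h2 : Integrable f2) (n0 : ∀ x, 0 ≤ f0 x) (n1 : ∀ x, 0 ≤ f1 x) (n2 : ∀ x, 0 ≤ f2 x)
    (hle : ∀ᵐ x : E3, ‖x‖ < 1 → F (x 0 / ‖x‖) ≤ ENNReal.ofReal (f0 (x 0) * f1 (x 1) * f2 (x 2))) :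
    ∫⁻ u, F ⟪v, u⟫_ℝ ∂μS
      ≤ ENNReal.ofReal (kB * ((∫ x, f0 x) * (∫ x, f1 x) * (∫ x, f2 x))) := by
  have hb := ball_trick μS hS hR F hF v (EuclideanSpace.single 0 1) hv (by simp)
  have : ∫⁻ x in Metric.ball (0 : E3) 1, F (⟪x, EuclideanSpace.single 0 1⟫_ℝ / ‖x‖)
      ≤ ENNReal.ofReal ((∫ x, f0 x) * (∫ x, f1 x) * (∫ x, f2 x)) := by
    rw [← lint_prod3 f0 f1 f2 h0 h1 h2 n0 n1 n2]
    refine le_trans ?_ (setLIntegral_le_lintegral (Metric.ball (0 : E3) 1) _)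
    apply setLIntegral_mono_ae' Metric.isOpen_ball.measurableSet
    filter_upwards [hle] with x hx hxb
    simpa [EuclideanSpace.inner_single_right] using hx (by simpa using hxb)
  rw [← hb] at this
  have hne : volume (Metric.ball (0 : E3) 1) ≠ 0 := (Metric.measure_ball_pos _ _ one_pos).ne'
  have hnt : volume (Metric.ball (0 : E3) 1) ≠ ⊤ := measure_ball_lt_top.ne
  rw [ENNReal.ofReal_mul kB_pos.le, kB, ENNReal.ofReal_inv_of_pos (ENNReal.toReal_pos hne hnt),
    ENNReal.ofReal_toReal hnt, mul_comm, ← div_eq_mul_inv, ENNReal.le_div_iff_mul_le (Or.inl hne) (Or.inl hnt), mul_comm]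
  exact this

open MeasureTheory ProbabilityTheory Real
open scoped ENNReal InnerProductSpace

/-- standard exponential law -/
noncomputable abbrev Ex : Measure ℝ := expMeasure 1

instance Ex_prob : IsProbabilityMeasure Ex := isProbabilityMeasure_expMeasure one_pos

lemma Ex_eq : Ex = (volume.restrict (Set.Ici 0)).withDensity (fun x => ENNReal.ofReal (exp (-x))) := by
  rw [← withDensity_indicator measurableSet_Ici]
  unfold Ex expMeasure gammaMeasure
  congr 1
  ext x
  by_cases hx : 0 ≤ x
  · rw [gammaPDF_of_nonneg hx]; simp [hx]
  · rw [gammaPDF_of_neg (not_le.mp hx)]; simp [hx]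

lemma Ex_le : Ex ≤ volume := by
  rw [Ex_eq]
  refine le_trans ?_ (Measure.restrict_le_self (s := Set.Ici (0:ℝ)))
  rw [Measure.le_iff]
  intro s hs
  rw [withDensity_apply _ hs, Measure.restrict_restrict hs]
  calc _ ≤ ∫⁻ x in s ∩ Set.Ici (0:ℝ), 1 := by
        apply setLIntegral_mono' (hs.inter measurableSet_Ici)
        intro x hx
        simpa using hx.2
    _ = _ := by simp [hs]

lemma Ex_Iic {t : ℝ} (ht : 0 ≤ t) : Ex (Set.Iic t) = ENNReal.ofReal (1 - exp (-t)) := by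
  rw [← ofReal_cdf, cdf_expMeasure_eq one_pos]; simp [ht]

lemma Ex_Iio_zero : Ex (Set.Iio 0) = 0 := by
  rw [Ex_eq, withDensity_apply _ measurableSet_Iio, Measure.restrict_restrict measurableSet_Iio]
  have : Set.Iio (0:ℝ) ∩ Set.Ici 0 = ∅ := by ext; simp
  rw [this]; simp

lemma Ex_Iic_zero : Ex (Set.Iic 0) = 0 := by
  rw [Ex_Iic le_rfl]; simp

lemma Ex_unique (μ : Measure ℝ) [IsProbabilityMeasure μ]
    (h : ∀ t : ℝ, 0 ≤ t → μ (Set.Iic t) = ENNReal.ofReal (1 - exp (-t))) : μ = Ex := by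
  apply Measure.ext_of_Iic
  intro a
  rcases le_or_gt 0 a with ha | ha
  · rw [h a ha, Ex_Iic ha]
  · have h0 := h 0 le_rfl
    simp only [neg_zero, exp_zero, sub_self, ENNReal.ofReal_zero] at h0
    rw [measure_mono_null (Set.Iic_subset_Iic.mpr ha.le) h0,
      measure_mono_null (Set.Iic_subset_Iic.mpr ha.le) Ex_Iic_zero]

lemma Ex_charFun (s : ℝ) : ∫ x, Complex.exp (x * s * Complex.I) ∂Ex = 1 / (1 - s * Complex.I) := by
  rw [Ex_eq, integral_withDensity_eq_integral_toReal_smul (by fun_prop) (by simp)]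
  have : ∀ x : ℝ, (ENNReal.ofReal (exp (-x))).toReal • Complex.exp (x * s * Complex.I)
      = Complex.exp ((-1 + s * Complex.I) * x) := by
    intro x
    rw [ENNReal.toReal_ofReal (exp_pos _).le, Complex.real_smul, Complex.ofReal_exp, ← Complex.exp_add]
    congr 1; push_cast; ring
  simp_rw [this]
  rw [integral_Ici_eq_integral_Ioi, integral_exp_mul_complex_Ioi (by simp)]
  simp
  rw [← neg_div_neg_eq, neg_neg, one_div, neg_add]
  simp [sub_eq_add_neg]

lemma Ex_laplace {l : ℝ} (hl : 0 < l) : ∫⁻ x, ENNReal.ofReal (exp (-l * x)) ∂Ex = ENNReal.ofReal (1 / (1 + l)) := by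
  rw [Ex_eq, lintegral_withDensity_eq_lintegral_mul _ (by fun_prop) (by fun_prop)]
  simp only [Pi.mul_apply]
  simp_rw [← ENNReal.ofReal_mul (exp_pos _).le, ← exp_add]
  have : ∀ x : ℝ, -x + -l * x = (-(1 + l)) * x := by intro x; ring
  simp_rw [this]
  rw [← ofReal_integral_eq_lintegral_ofReal, integral_Ici_eq_integral_Ioi,
    integral_exp_mul_Ioi (by linarith)]
  · congr 1; simp; rw [← neg_div_neg_eq]; simp
  · exact (integrableOn_Ici_iff_integrableOn_Ioi (μ := volume)).mpr (integrableOn_exp_mul_Ioi (by linarith) 0)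
  · exact Filter.Eventually.of_forall fun x => (exp_pos _).le

section
variable (μS : Measure E3) [IsProbabilityMeasure μS]

lemma ind_int : Integrable (Set.indicator (Set.Icc (-1:ℝ) 1) (fun _ => (1:ℝ))) := by
  rw [integrable_indicator_iff measurableSet_Icc]
  simp

lemma ind_val : ∫ x, (Set.indicator (Set.Icc (-1:ℝ) 1) (fun _ => (1:ℝ))) x = 2 := by
  rw [integral_indicator measurableSet_Icc]; simp; norm_num

lemma coord_le (x : E3) (i : Fin 3) : |x i| ≤ ‖x‖ := by
  simpa using EuclideanSpace.norm_eq x ▸ PiLp.norm_apply_le x i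

lemma est1 (hS : μS (Metric.sphere (0 : E3) 1)ᶜ = 0) (hR : ∀ R : E3 ≃ₗᵢ[ℝ] E3, μS.map R = μS) (v : E3) (hv : ‖v‖ = 1) {t : ℝ} (ht : 0 < t) :
    ∫⁻ u, ENNReal.ofReal ((1 + (t * ⟪v, u⟫_ℝ) ^ 2)⁻¹) ∂μS ≤ ENNReal.ofReal (kB * (π / t * 2 * 2)) := by
  have h := ball_bound μS hS hR (fun c => ENNReal.ofReal ((1 + (t * c) ^ 2)⁻¹)) (by fun_prop) v hv
    (fun c => (1 + (t * c) ^ 2)⁻¹) _ _ (integrable_inv_one_add_sq.comp_mul_left' ht.ne')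
    ind_int ind_int (fun x => by positivity) (fun x => Set.indicator_nonneg (by simp) x)
    (fun x => Set.indicator_nonneg (by simp) x) ?_
  · rw [ind_val, Measure.integral_comp_mul_left (fun x => (1 + x ^ 2)⁻¹) t,
      integral_univ_inv_one_add_sq] at h
    convert h using 4
    rw [abs_of_pos (by positivity), smul_eq_mul]; ring
  · refine Filter.Eventually.of_forall fun x hx => ?_
    have h1 := (abs_le.mp ((coord_le x 1).trans hx.le))
    have h2 := (abs_le.mp ((coord_le x 2).trans hx.le))
    apply ENNReal.ofReal_le_ofReal
    rw [Set.indicator_of_mem (by exact ⟨h1.1, h1.2⟩), Set.indicator_of_mem (by exact ⟨h2.1, h2.2⟩),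
      mul_one, mul_one]
    apply inv_anti₀ (by positivity)
    rw [mul_pow, mul_pow]
    gcongr 1 + t ^ 2 * ?_
    rcases (norm_nonneg x).eq_or_lt with h0 | h0
    · have : x = 0 := norm_eq_zero.mp h0.symm
      simp [this]
    · rw [div_pow, le_div_iff₀ (by positivity)]
      have : ‖x‖ ^ 2 ≤ 1 := by nlinarith
      nlinarith [sq_nonneg (x 0)]

noncomputable def fhalf : ℝ → ℝ := Set.indicator (Set.Icc (-1:ℝ) 1) (fun x => (√|x|)⁻¹)

lemma fhalf_nonneg (x : ℝ) : 0 ≤ fhalf x := Set.indicator_nonneg (fun _ _ => by positivity) x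

lemma fhalf_int : Integrable fhalf := by
  unfold fhalf
  rw [integrable_indicator_iff measurableSet_Icc]
  have hpos : IntegrableOn (fun x : ℝ => (√|x|)⁻¹) (Set.Ioc 0 1) := by
    have : IntervalIntegrable (fun x : ℝ => x ^ (-(1/2) : ℝ)) volume 0 1 :=
      intervalIntegral.intervalIntegrable_rpow' (by norm_num)
    rw [intervalIntegrable_iff_integrableOn_Ioc_of_le zero_le_one] at this
    refine this.congr_fun (fun x hx => ?_) measurableSet_Ioc
    simp only [abs_of_pos hx.1]
    rw [rpow_neg hx.1.le, sqrt_eq_rpow]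
  have hneg : IntegrableOn (fun x : ℝ => (√|x|)⁻¹) (Set.Ico (-1) 0) := by
    have := hpos.comp_neg
    simpa using this
  have h0 : IntegrableOn (fun x : ℝ => (√|x|)⁻¹) {0} := by simp
  refine ((hneg.union h0).union hpos).mono_set ?_
  intro x hx
  rcases lt_trichotomy x 0 with h | h | h
  · exact Or.inl (Or.inl ⟨hx.1, h⟩)
  · exact Or.inl (Or.inr h)
  · exact Or.inr ⟨h, hx.2⟩

noncomputable def cSin : ℝ := kB * (2 * (∫ x, fhalf x) * (∫ x, fhalf x))

lemma cSin_nonneg : 0 ≤ cSin := by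
  unfold cSin
  have := integral_nonneg (μ := volume) (f := fhalf) fhalf_nonneg
  have := kB_pos
  positivity

lemma coord_ne (i : Fin 3) : ∀ᵐ x : E3, x i ≠ 0 := by
  have hp := (EuclideanSpace.volume_preserving_symm_measurableEquiv_toLp (Fin 3))
  have h : ∀ᵐ y : Fin 3 → ℝ, y i ≠ 0 := by
    have := (Measure.quasiMeasurePreserving_eval (fun _ : Fin 3 => (volume : Measure ℝ)) i).ae
      (p := fun x => x ≠ 0) (by simp [ae_iff])
    exact this
  exact hp.quasiMeasurePreserving.ae h

lemma est2 (hS : μS (Metric.sphere (0 : E3) 1)ᶜ = 0) (hR : ∀ R : E3 ≃ₗᵢ[ℝ] E3, μS.map R = μS) (v : E3) (hv : ‖v‖ = 1) :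
    ∫⁻ u, (ENNReal.ofReal (√(1 - ⟪v, u⟫_ℝ ^ 2)))⁻¹ ∂μS ≤ ENNReal.ofReal cSin := by
  have h := ball_bound μS hS hR (fun c => (ENNReal.ofReal (√(1 - c ^ 2)))⁻¹) (by fun_prop) v hv
    _ fhalf fhalf ind_int fhalf_int fhalf_int (fun x => Set.indicator_nonneg (by simp) x)
    fhalf_nonneg fhalf_nonneg ?_
  · rw [ind_val] at h
    exact h
  · filter_upwards [coord_ne 1, coord_ne 2] with x hx1 hx2 hx
    have h0 := (abs_le.mp ((coord_le x 0).trans hx.le))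
    have h1 := (abs_le.mp ((coord_le x 1).trans hx.le))
    have h2 := (abs_le.mp ((coord_le x 2).trans hx.le))
    rw [Set.indicator_of_mem (by exact ⟨h0.1, h0.2⟩), fhalf, Set.indicator_of_mem (by exact ⟨h1.1, h1.2⟩),
      Set.indicator_of_mem (by exact ⟨h2.1, h2.2⟩), one_mul, ← mul_inv, ← sqrt_mul (abs_nonneg _),
      ENNReal.ofReal_inv_of_pos (by positivity)]
    apply ENNReal.inv_le_inv.mpr
    apply ENNReal.ofReal_le_ofReal
    apply sqrt_le_sqrt
    have hn : 0 < ‖x‖ := (abs_pos.mpr hx1).trans_le (coord_le x 1)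
    have hsq : ‖x‖ ^ 2 = x 0 ^ 2 + x 1 ^ 2 + x 2 ^ 2 := by
      rw [EuclideanSpace.norm_sq_eq, Fin.sum_univ_three]; simp
    rw [div_pow, one_sub_div (by positivity), le_div_iff₀ (by positivity), hsq]
    have : x 0 ^ 2 + x 1 ^ 2 + x 2 ^ 2 ≤ 1 := by rw [← hsq]; nlinarith
    have hm : 0 ≤ |x 1| * |x 2| := by positivity
    nlinarith [sq_nonneg (|x 1| - |x 2|), sq_abs (x 1), sq_abs (x 2)]

lemma ae_norm (hS : μS (Metric.sphere (0 : E3) 1)ᶜ = 0) : ∀ᵐ u ∂μS, ‖u‖ = 1 := by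
  rw [ae_iff]; convert hS using 2; ext x; simp

lemma inner_sq_int (hS : μS (Metric.sphere (0 : E3) 1)ᶜ = 0) (v : E3) : Integrable (fun u => ⟪v, u⟫_ℝ ^ 2) μS := by
  apply Integrable.of_bound (C := ‖v‖ ^ 2) (by fun_prop)
  filter_upwards [ae_norm μS hS] with u hu
  have := abs_real_inner_le_norm v u
  rw [hu, mul_one] at this
  rw [norm_pow, norm_eq_abs]
  gcongr

lemma est3 (hS : μS (Metric.sphere (0 : E3) 1)ᶜ = 0) (hR : ∀ R : E3 ≃ₗᵢ[ℝ] E3, μS.map R = μS) (v : E3) : ∫ u, ⟪v, u⟫_ℝ ^ 2 ∂μS = ‖v‖ ^ 2 / 3 := by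
  have h1 : ∀ v e : E3, ‖v‖ = ‖e‖ → ∫ u, ⟪v, u⟫_ℝ ^ 2 ∂μS = ∫ u, ⟪e, u⟫_ℝ ^ 2 ∂μS := by
    intro v e hve
    obtain ⟨R, rfl⟩ := exists_isom v e hve
    conv_rhs => rw [← hR R]
    rw [integral_map R.continuous.measurable.aemeasurable (by fun_prop)]
    simp
  have h2 : ∑ i : Fin 3, ∫ u, ⟪(EuclideanSpace.single i ‖v‖ : E3), u⟫_ℝ ^ 2 ∂μS = ‖v‖ ^ 2 := by
    rw [← integral_finsetSum _ (fun i _ => inner_sq_int μS hS _)]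
    rw [integral_congr_ae (g := fun _ => ‖v‖ ^ 2)]
    · simp
    · filter_upwards [ae_norm μS hS] with u hu
      have : ‖u‖ ^ 2 = u 0 ^ 2 + u 1 ^ 2 + u 2 ^ 2 := by
        rw [EuclideanSpace.norm_sq_eq, Fin.sum_univ_three]; simp
      rw [hu] at this
      simp only [EuclideanSpace.inner_single_left, Fin.sum_univ_three]
      simp
      linear_combination -‖v‖ ^ 2 * this
  rw [Finset.sum_congr rfl (fun i _ => h1 _ v (by simp))] at h2
  simp at h2
  linarith

/-- characteristic function of a single flight -/
noncomputable def phi (t : E3) : ℝ := ∫ u, (1 + ⟪u, t⟫_ℝ ^ 2)⁻¹ ∂μS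

lemma phi_int (t : E3) : Integrable (fun u => (1 + ⟪u, t⟫_ℝ ^ 2)⁻¹) μS := by
  apply Integrable.of_bound (C := 1) (by fun_prop)
  refine Filter.Eventually.of_forall fun u => ?_
  rw [norm_inv, norm_eq_abs, abs_of_nonneg (by positivity)]
  exact inv_le_one_of_one_le₀ (by nlinarith [sq_nonneg ⟪u, t⟫_ℝ])

/-- universal bound for the characteristic function -/
noncomputable def gB (s : ℝ) : ℝ := min (1 - s ^ 2 / (3 * (1 + s ^ 2))) (kB * (4 * π) / s)

lemma phi_nonneg (t : E3) : 0 ≤ phi μS t := integral_nonneg fun u => by positivity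

lemma phi_le (hS : μS (Metric.sphere (0 : E3) 1)ᶜ = 0) (hR : ∀ R : E3 ≃ₗᵢ[ℝ] E3, μS.map R = μS) (t : E3) (ht : t ≠ 0) : phi μS t ≤ gB ‖t‖ := by
  have hn : 0 < ‖t‖ := norm_pos_iff.mpr ht
  apply le_min
  · have : phi μS t ≤ ∫ u, (1 - ⟪t, u⟫_ℝ ^ 2 / (1 + ‖t‖ ^ 2)) ∂μS := by
      apply integral_mono_ae (phi_int μS t) 
        ((integrable_const _).sub ((inner_sq_int μS hS t).div_const _))
      filter_upwards [ae_norm μS hS] with u hu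
      have h1 := abs_real_inner_le_norm t u
      rw [hu, mul_one] at h1
      have h2 : ⟪t, u⟫_ℝ ^ 2 ≤ ‖t‖ ^ 2 := by rw [← sq_abs]; gcongr
      rw [real_inner_comm]
      have : (1 + ⟪t, u⟫_ℝ ^ 2)⁻¹ = 1 - ⟪t, u⟫_ℝ ^ 2 / (1 + ⟪t, u⟫_ℝ ^ 2) := by field_simp; ring
      simp only [this]
      have h3 : ⟪t, u⟫_ℝ ^ 2 / (1 + ‖t‖ ^ 2) ≤ ⟪t, u⟫_ℝ ^ 2 / (1 + ⟪t, u⟫_ℝ ^ 2) := by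
        apply div_le_div_of_nonneg_left (by positivity) (by positivity) (by linarith)
      simp only [Pi.sub_apply]
      linarith
    refine this.trans (le_of_eq ?_)
    rw [integral_sub (integrable_const _) ((inner_sq_int μS hS t).div_const _), integral_div,
      est3 μS hS hR]
    simp
    field_simp
  · have h := est1 μS hS hR (‖t‖⁻¹ • t) (by rw [norm_smul, norm_inv, norm_norm, inv_mul_cancel₀ hn.ne']) hn
    have e : ∀ u, (1 + (‖t‖ * ⟪‖t‖⁻¹ • t, u⟫_ℝ) ^ 2)⁻¹ = (1 + ⟪u, t⟫_ℝ ^ 2)⁻¹ := by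
      intro u
      rw [inner_smul_left, real_inner_comm]
      simp [hn.ne']
    simp_rw [e] at h
    rw [← ofReal_integral_eq_lintegral_ofReal (phi_int μS t) (Filter.Eventually.of_forall fun u => by positivity),
      ENNReal.ofReal_le_ofReal_iff (by have := kB_pos; positivity)] at h
    refine h.trans (le_of_eq ?_)
    field_simp; ring

lemma charFun_flight (hR : ∀ R : E3 ≃ₗᵢ[ℝ] E3, μS.map R = μS) (t : E3) :
    charFun ((Ex.prod μS).map (fun p => p.1 • p.2)) t = phi μS t := by
  rw [charFun_apply, integral_map (by fun_prop) (by fun_prop)]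
  have hint : Integrable (fun p : ℝ × E3 => Complex.exp (⟪p.1 • p.2, t⟫_ℝ * Complex.I)) (Ex.prod μS) := by
    apply Integrable.of_bound (C := 1) (by fun_prop)
    refine Filter.Eventually.of_forall fun u => ?_
    rw [Complex.norm_exp_ofReal_mul_I]
  rw [integral_prod_symm _ hint]
  have : ∀ y : E3, ∫ x, Complex.exp (⟪x • y, t⟫_ℝ * Complex.I) ∂Ex = 1 / (1 - ⟪y, t⟫_ℝ * Complex.I) := by
    intro y
    rw [← Ex_charFun]
    congr with x
    rw [inner_smul_left]
    push_cast
    rfl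
  simp only [this]
  have hn : ∀ y : E3, (1 - ⟪y, t⟫_ℝ * Complex.I : ℂ) ≠ 0 := by
    intro y h
    have := congrArg Complex.re h
    simp at this
  have hn2 : ∀ y : E3, (1 + ⟪y, t⟫_ℝ ^ 2 : ℂ) ≠ 0 := by
    intro y
    have : (0:ℝ) < 1 + ⟪y, t⟫_ℝ ^ 2 := by positivity
    exact_mod_cast this.ne'
  set J := ∫ y, 1 / (1 - ⟪y, t⟫_ℝ * Complex.I : ℂ) ∂μS with hJ
  have hint2 : Integrable (fun y : E3 => 1 / (1 - ⟪y, t⟫_ℝ * Complex.I : ℂ)) μS := by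
    apply Integrable.of_bound (C := 1)
    · apply Measurable.aestronglyMeasurable
      fun_prop
    refine Filter.Eventually.of_forall fun y => ?_
    rw [norm_div, norm_one, div_le_one (norm_pos_iff.mpr (hn y))]
    refine le_trans ?_ (Complex.abs_re_le_norm _)
    simp
  have hJ2 : J = ∫ y, 1 / (1 + ⟪y, t⟫_ℝ * Complex.I : ℂ) ∂μS := by
    rw [hJ]
    conv_lhs => rw [← hR (LinearIsometryEquiv.neg ℝ)]
    rw [integral_map (by fun_prop) (by apply Measurable.aestronglyMeasurable; fun_prop)]
    simp
  have hint3 : Integrable (fun y : E3 => 1 / (1 + ⟪y, t⟫_ℝ * Complex.I : ℂ)) μS := by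
    have h := hint2
    rw [← hR (LinearIsometryEquiv.neg ℝ)] at h
    have := h.comp_measurable (LinearIsometryEquiv.neg ℝ).continuous.measurable
    refine this.congr (Filter.Eventually.of_forall fun y => ?_)
    simp
  have h2 : J + J = 2 * phi μS t := by
    conv_lhs => 
      congr
      · skip
      · rw [hJ2]
    rw [hJ, ← integral_add hint2 hint3, phi, ← integral_complex_ofReal, ← integral_const_mul]
    congr with y
    push_cast
    have h3 : (1 + ⟪y, t⟫_ℝ * Complex.I : ℂ) ≠ 0 := by
      intro h
      have := congrArg Complex.re h
      simp at this
    have := hn y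
    have := hn2 y
    field_simp
    ring_nf
    simp
  linear_combination h2 / 2
end

open MeasureTheory ProbabilityTheory Real
open scoped ENNReal InnerProductSpace

/-- integral of the `n`-th power of the characteristic function bound -/
noncomputable def aN (n : ℕ) : ℝ≥0∞ := ∫⁻ t : E3, ENNReal.ofReal (gB ‖t‖) ^ n

lemma conc_fourier (ν : Measure E3) [IsProbabilityMeasure ν] (n : ℕ)
    (h : ∀ t : E3, t ≠ 0 → ‖charFun ν t‖ ≤ gB ‖t‖ ^ n) (y : E3) {ε : ℝ} (hε : 0 < ε) :
    ν {x | ‖x - y‖ < ε} ≤ ENNReal.ofReal (ε ^ 3) * aN n := by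
  set b : ℝ := ε ^ 2 / 2 with hb
  have hbpos : 0 < b := by positivity
  set κ : ℝ := (π / b) ^ (3 / 2 : ℝ) with hκ
  have hgauss : ∀ x : E3, ∫ v : E3, Complex.exp (-b * ‖v‖ ^ 2 + Complex.I * ⟪x - y, v⟫_ℝ)
      = ((κ * exp (-‖x - y‖ ^ 2 / (2 * ε ^ 2)) : ℝ) : ℂ) := by
    intro x
    rw [GaussianFourier.integral_cexp_neg_mul_sq_norm_add (by simpa using hbpos)]
    rw [hκ]
    push_cast
    rw [Complex.ofReal_cpow (by positivity)]
    congr 2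
    · push_cast; rfl
    · simp
    · rw [hb]; push_cast; rw [Complex.I_sq]; field_simp; norm_num
  have hmeas : StronglyMeasurable (fun p : E3 × E3 =>
      Complex.exp (-b * ‖p.2‖ ^ 2 + Complex.I * ⟪p.1 - y, p.2⟫_ℝ)) := by
    apply Measurable.stronglyMeasurable
    fun_prop
  have hgi : Integrable (fun v : E3 => exp (-b * ‖v‖ ^ 2)) := by
    have := GaussianFourier.integrable_cexp_neg_mul_sq_norm_add (V := E3) (b := b) (by simpa using hbpos) 0 0
    have := this.norm
    refine this.congr (Filter.Eventually.of_forall fun v => ?_)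
    simp only [Complex.norm_exp]
    congr 1
    simp [← Complex.ofReal_pow]
  have hnorm : ∀ x v : E3, ‖Complex.exp (-b * ‖v‖ ^ 2 + Complex.I * ⟪x - y, v⟫_ℝ)‖ = exp (-b * ‖v‖ ^ 2) := by
    intro x v
    simp only [Complex.norm_exp]
    congr 1
    simp [← Complex.ofReal_pow]
  have hint : Integrable (fun p : E3 × E3 =>
      Complex.exp (-b * ‖p.2‖ ^ 2 + Complex.I * ⟪p.1 - y, p.2⟫_ℝ)) (ν.prod volume) := by
    have h1 : Integrable (fun p : E3 × E3 => exp (-b * ‖p.2‖ ^ 2)) (ν.prod volume) := hgi.comp_snd ν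
    refine h1.mono hmeas.aestronglyMeasurable (Filter.Eventually.of_forall fun p => ?_)
    rw [hnorm, norm_of_nonneg (exp_pos _).le]
  have hswap := integral_integral_swap (f := fun x v : E3 =>
      Complex.exp (-b * ‖v‖ ^ 2 + Complex.I * ⟪x - y, v⟫_ℝ)) hint
  simp_rw [hgauss] at hswap
  rw [integral_complex_ofReal] at hswap
  have hbound : ‖∫ v : E3, ∫ x, Complex.exp (-b * ‖v‖ ^ 2 + Complex.I * ⟪x - y, v⟫_ℝ) ∂ν‖ₑ ≤ aN n := by
    refine (enorm_integral_le_lintegral_enorm _).trans ?_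
    apply lintegral_mono_ae
    have : ∀ᵐ x : E3, x ≠ 0 := by simp [ae_iff]
    filter_upwards [this] with v hv
    have e : ∀ x : E3, Complex.exp (-b * ‖v‖ ^ 2 + Complex.I * ⟪x - y, v⟫_ℝ)
       = Complex.exp (-b * ‖v‖ ^ 2 - Complex.I * ⟪y, v⟫_ℝ) * Complex.exp (⟪x, v⟫_ℝ * Complex.I) := by
      intro x
      rw [← Complex.exp_add, inner_sub_left]
      congr 1; push_cast; ring
    simp_rw [e]
    rw [integral_const_mul, ← charFun_apply, ← ofReal_norm, norm_mul]
    have h1 : ‖Complex.exp (-b * ‖v‖ ^ 2 - Complex.I * ⟪y, v⟫_ℝ)‖ ≤ 1 := by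
      simp only [Complex.norm_exp]
      simp [← Complex.ofReal_pow]
      positivity
    have h2 := h v hv
    have h3 : 0 ≤ gB ‖v‖ := by
      have hk := kB_pos
      apply le_min
      · rw [sub_nonneg, div_le_one (by positivity)]; nlinarith [sq_nonneg ‖v‖]
      · positivity
    rw [← ENNReal.ofReal_pow h3]
    apply ENNReal.ofReal_le_ofReal
    calc _ ≤ 1 * gB ‖v‖ ^ n := by gcongr
      _ = _ := one_mul _
  rw [← hswap, ← ofReal_norm, Complex.norm_real, norm_of_nonneg (by positivity)] at hbound
  have hl : ENNReal.ofReal (ε ^ 3)⁻¹ * ν {x | ‖x - y‖ < ε} ≤ aN n := by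
    refine le_trans ?_ hbound
    rw [ofReal_integral_eq_lintegral_ofReal]
    · have hm : MeasurableSet {x : E3 | ‖x - y‖ < ε} := measurableSet_lt (by fun_prop) (by fun_prop)
      rw [← setLIntegral_const]
      refine le_trans ?_ (setLIntegral_le_lintegral {x : E3 | ‖x - y‖ < ε} _)
      apply setLIntegral_mono' hm
      intro x hx
      apply ENNReal.ofReal_le_ofReal
      have hx' : ‖x - y‖ ^ 2 ≤ ε ^ 2 := by
        have : ‖x - y‖ < ε := hx
        gcongr
      have e1 : exp (-(1/2)) ≤ exp (-‖x - y‖ ^ 2 / (2 * ε ^ 2)) := by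
        apply exp_le_exp.mpr
        rw [neg_div, neg_le_neg_iff, div_le_div_iff₀ (by positivity) (by norm_num)]
        linarith
      have e2 : (1:ℝ)/2 ≤ exp (-(1/2)) := by
        have := add_one_le_exp (-(1/2):ℝ)
        linarith
      have e3 : κ = (2 * π) ^ (3/2 : ℝ) * (ε ^ 3)⁻¹ := by
        rw [hκ, hb]
        have : π / (ε ^ 2 / 2) = (2 * π) * (ε⁻¹) ^ (2:ℝ) := by
          rw [rpow_ofNat]; field_simp
        rw [this, mul_rpow (by positivity) (by positivity), ← rpow_mul (by positivity)]
        norm_num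
      have e4 : 2 ≤ (2 * π) ^ (3/2 : ℝ) := by
        have h3 : 1 ≤ 2 * π := by linarith [pi_gt_three]
        calc (2:ℝ) ≤ 2 * π := by linarith [pi_gt_three]
          _ = (2 * π) ^ (1:ℝ) := (rpow_one _).symm
          _ ≤ _ := rpow_le_rpow_of_exponent_le h3 (by norm_num)
      rw [e3]
      have : 0 < (ε ^ 3)⁻¹ := by positivity
      calc (ε ^ 3)⁻¹ = 2 * (ε ^ 3)⁻¹ * (1/2) := by ring
        _ ≤ _ := by
          gcongr
          exact e2.trans e1
    · refine Integrable.const_mul ?_ _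
      apply Integrable.of_bound (C := 1) (by fun_prop)
      refine Filter.Eventually.of_forall fun x => ?_
      rw [norm_of_nonneg (exp_pos _).le]
      apply exp_le_one_iff.mpr
      rw [neg_div, neg_nonpos]; positivity
    · exact Filter.Eventually.of_forall fun x => by positivity
  calc ν {x | ‖x - y‖ < ε} = ENNReal.ofReal (ε ^ 3) * (ENNReal.ofReal (ε ^ 3)⁻¹ * ν {x | ‖x - y‖ < ε}) := by
        rw [← mul_assoc, ← ENNReal.ofReal_mul (by positivity), mul_inv_cancel₀ (by positivity)]; simp
    _ ≤ _ := by gcongr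

lemma aN_sum : ∑' n, aN (n + 4) < ⊤ := by
  unfold aN
  have hmeas : Measurable gB := by unfold gB; fun_prop
  rw [← lintegral_tsum (fun n => by fun_prop)]
  set M := kB * (4 * π) with hM
  have hMpos : 0 < M := by have := kB_pos; positivity
  have hI : Integrable (fun t : E3 => (fun s : ℝ => 3 * (1 + M ^ 2) ^ 2 / (s ^ 2 * (1 + s ^ 2))) ‖t‖) := by
    refine (integrable_fun_norm_addHaar (volume : Measure E3)
      (f := fun s : ℝ => 3 * (1 + M ^ 2) ^ 2 / (s ^ 2 * (1 + s ^ 2)))).mpr ?_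
    have : Integrable (fun s : ℝ => (3 * (1 + M ^ 2) ^ 2) * (1 + s ^ 2)⁻¹) :=
      integrable_inv_one_add_sq.const_mul _
    refine (this.integrableOn (s := Set.Ioi 0)).congr_fun (fun s hs => ?_) measurableSet_Ioi
    have : (0:ℝ) < s := hs
    simp only [finrank_euclideanSpace, Fintype.card_fin, smul_eq_mul]
    norm_num
    field_simp
  refine lt_of_le_of_lt ?_ hI.lintegral_lt_top
  apply lintegral_mono_ae
  have : ∀ᵐ x : E3, x ≠ 0 := by simp [ae_iff]
  filter_upwards [this] with t ht
  have hs : 0 < ‖t‖ := norm_pos_iff.mpr ht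
  set s := ‖t‖
  have hg0 : 0 < gB s := by
    apply lt_min
    · rw [sub_pos, div_lt_one (by positivity)]; nlinarith
    · positivity
  have hg1 : gB s ≤ 1 - s ^ 2 / (3 * (1 + s ^ 2)) := min_le_left _ _
  have hg2 : gB s * s ≤ M := by
    rw [← le_div_iff₀ hs]; exact min_le_right _ _
  have hd : 0 < s ^ 2 / (3 * (1 + s ^ 2)) := by positivity
  have hq : ∑' n : ℕ, ENNReal.ofReal (gB s) ^ (n + 4) = ENNReal.ofReal (gB s ^ 4 / (1 - gB s)) := by
    simp_rw [pow_add]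
    rw [ENNReal.tsum_mul_right, ENNReal.tsum_geometric, ← ENNReal.ofReal_one, ← ENNReal.ofReal_sub _ hg0.le,
      ← ENNReal.ofReal_inv_of_pos (by linarith), ← ENNReal.ofReal_pow hg0.le, ← ENNReal.ofReal_mul (by
        apply inv_nonneg.mpr; linarith)]
    congr 1; rw [div_eq_mul_inv, mul_comm]
  rw [hq]
  apply ENNReal.ofReal_le_ofReal
  have h4 : gB s ^ 2 * (1 + s ^ 2) ≤ 1 + M ^ 2 := by
    have h5 : (gB s * s) ^ 2 ≤ M ^ 2 := by gcongr
    have h6 : gB s ^ 2 ≤ 1 := by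
      have : gB s ≤ 1 := by linarith
      nlinarith
    nlinarith
  calc gB s ^ 4 / (1 - gB s) ≤ gB s ^ 4 / (s ^ 2 / (3 * (1 + s ^ 2))) := by
        apply div_le_div_of_nonneg_left (by positivity) hd (by linarith)
    _ = (gB s ^ 2 * (1 + s ^ 2)) ^ 2 * 3 / (s ^ 2 * (1 + s ^ 2)) := by field_simp
    _ ≤ (1 + M ^ 2) ^ 2 * 3 / (s ^ 2 * (1 + s ^ 2)) := by gcongr
    _ = _ := by ring

open MeasureTheory ProbabilityTheory Real
open scoped ENNReal InnerProductSpace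

lemma Ex_strip (B : Set (ℝ × ℝ)) (hB : MeasurableSet B) (c A ε : ℝ) (f : ℝ → ℝ)
    (h : ∀ p ∈ B, |p.1 - c| ≤ A ∧ |p.2 - f p.1| ≤ ε) :
    (Ex.prod Ex) B ≤ ENNReal.ofReal (2 * A) * ENNReal.ofReal (2 * ε) := by
  rw [Measure.prod_apply hB]
  have h1 : ∀ a, Ex (Prod.mk a ⁻¹' B) ≤ (Set.Icc (c - A) (c + A)).indicator
      (fun _ => ENNReal.ofReal (2 * ε)) a := by
    intro a
    by_cases ha : a ∈ Set.Icc (c - A) (c + A)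
    · rw [Set.indicator_of_mem ha]
      refine (Ex_le _).trans ?_
      calc volume (Prod.mk a ⁻¹' B) ≤ volume (Set.Icc (f a - ε) (f a + ε)) := by
            apply measure_mono
            intro b hb
            have := abs_le.mp (h _ hb).2
            simp only at this
            exact ⟨by linarith, by linarith⟩
        _ = _ := by rw [Real.volume_Icc]; congr 1; ring
    · rw [Set.indicator_of_notMem ha]
      have : Prod.mk a ⁻¹' B = ∅ := by
        rw [Set.eq_empty_iff_forall_notMem]
        intro b hb
        apply ha
        have := abs_le.mp (h _ hb).1
        simp only at this
        exact ⟨by linarith, by linarith⟩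
      rw [this]; simp
  calc _ ≤ ∫⁻ a, (Set.Icc (c - A) (c + A)).indicator (fun _ => ENNReal.ofReal (2 * ε)) a ∂Ex :=
        lintegral_mono h1
    _ = ENNReal.ofReal (2 * ε) * Ex (Set.Icc (c - A) (c + A)) := by
        rw [lintegral_indicator measurableSet_Icc, setLIntegral_const]
    _ ≤ ENNReal.ofReal (2 * ε) * volume (Set.Icc (c - A) (c + A)) := by gcongr; exact Ex_le
    _ = _ := by rw [Real.volume_Icc, mul_comm]; congr 2; ring

lemma two_fixed (u v y : E3) (hu : ‖u‖ = 1) (hv : ‖v‖ = 1) {ε : ℝ} (hε : 0 < ε) :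
    (Ex.prod Ex) {p | ‖p.1 • u + p.2 • v - y‖ < ε} ≤
      ENNReal.ofReal (4 * ε ^ 2) * (ENNReal.ofReal (√(1 - ⟪u, v⟫_ℝ ^ 2)))⁻¹ := by
  have hB : MeasurableSet {p : ℝ × ℝ | ‖p.1 • u + p.2 • v - y‖ < ε} :=
    measurableSet_lt (by fun_prop) (by fun_prop)
  rcases (sqrt_nonneg (1 - ⟪u, v⟫_ℝ ^ 2)).eq_or_lt with h0 | hs
  · rw [← h0]
    simp only [ENNReal.ofReal_zero, ENNReal.inv_zero]
    rw [ENNReal.mul_top]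
    · exact le_top
    · simp; positivity
  set s := √(1 - ⟪u, v⟫_ℝ ^ 2) with hsd
  have hs2 : s ^ 2 = 1 - ⟪u, v⟫_ℝ ^ 2 := sq_sqrt (sqrt_pos.mp hs).le
  set n := u - ⟪u, v⟫_ℝ • v with hn
  have huu : ⟪u, u⟫_ℝ = 1 := by rw [real_inner_self_eq_norm_sq, hu]; norm_num
  have hvv : ⟪v, v⟫_ℝ = 1 := by rw [real_inner_self_eq_norm_sq, hv]; norm_num
  have hnn : ‖n‖ = s := by
    rw [← sq_eq_sq₀ (norm_nonneg _) hs.le, hs2, ← real_inner_self_eq_norm_sq, hn]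
    simp only [inner_sub_left, inner_sub_right, inner_smul_left, inner_smul_right, huu, hvv, real_inner_comm]
    simp
    ring
  have hun : ⟪u, n⟫_ℝ = s ^ 2 := by
    rw [hn, inner_sub_right, inner_smul_right, huu, hs2]; ring
  have hvn : ⟪v, n⟫_ℝ = 0 := by
    rw [hn, inner_sub_right, inner_smul_right, hvv, real_inner_comm]; ring
  refine (Ex_strip _ hB (⟪y, n⟫_ℝ / s ^ 2) (ε / s) ε (fun a => ⟪y - a • u, v⟫_ℝ) ?_).trans ?_
  · rintro ⟨a, b⟩ hab
    have hab : ‖a • u + b • v - y‖ < ε := hab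
    constructor
    · have h1 := abs_real_inner_le_norm (a • u + b • v - y) n
      rw [inner_sub_left, inner_add_left, inner_smul_left, inner_smul_left, hun, hvn, hnn] at h1
      simp only [conj_trivial, mul_zero, add_zero] at h1
      have h2 : |a * s ^ 2 - ⟪y, n⟫_ℝ| ≤ ε * s := h1.trans (by gcongr)
      have h3 : a - ⟪y, n⟫_ℝ / s ^ 2 = (a * s ^ 2 - ⟪y, n⟫_ℝ) / s ^ 2 := by field_simp
      simp only
      rw [h3, abs_div, abs_of_pos (show 0 < s ^ 2 by positivity), div_le_div_iff₀ (by positivity) hs]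
      calc _ ≤ ε * s * s := by gcongr
        _ = _ := by ring
    · have h1 := abs_real_inner_le_norm (a • u + b • v - y) v
      rw [hv, mul_one] at h1
      have : ⟪a • u + b • v - y, v⟫_ℝ = b - ⟪y - a • u, v⟫_ℝ := by
        simp only [inner_sub_left, inner_add_left, inner_smul_left, hvv]
        simp; ring
      rw [this] at h1
      exact h1.trans hab.le
  · rw [← ENNReal.ofReal_inv_of_pos hs, ← ENNReal.ofReal_mul (by positivity), ← ENNReal.ofReal_mul (by positivity)]
    apply ENNReal.ofReal_le_ofReal
    apply le_of_eq
    field_simp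
    ring

lemma one_one (u v : E3) (hu : ‖u‖ = 1) (hv : ‖v‖ = 1) {ε w : ℝ} (hε : 0 < ε) (hw : 0 < w)
    (hwle : w ≤ 2 * arcsin (√((1 - ⟪u, v⟫_ℝ) / 2))) :
    (Ex.prod Ex) {p | ‖p.1 • u - p.2 • v‖ < ε} ≤ ENNReal.ofReal (4 * π * ε ^ 2 / w) := by
  set s := √((1 - ⟪u, v⟫_ℝ) / 2) with hs
  have huu : ⟪u, u⟫_ℝ = 1 := by rw [real_inner_self_eq_norm_sq, hu]; norm_num
  have hvv : ⟪v, v⟫_ℝ = 1 := by rw [real_inner_self_eq_norm_sq, hv]; norm_num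
  have hc := abs_le.mp (abs_real_inner_le_norm u v)
  rw [hu, hv] at hc
  have hs2 : s ^ 2 = (1 - ⟪u, v⟫_ℝ) / 2 := sq_sqrt (by linarith)
  have hs0 : 0 ≤ s := sqrt_nonneg _
  have hs1 : s ≤ 1 := by nlinarith
  have hsw : w / π ≤ s := by
    have h1 := mul_le_sin (x := arcsin s) (arcsin_nonneg.mpr hs0) (arcsin_le_pi_div_two s)
    rw [sin_arcsin (by linarith) hs1] at h1
    refine le_trans ?_ h1
    rw [div_mul_eq_mul_div]
    gcongr
  have hspos : 0 < s := lt_of_lt_of_le (by positivity) hsw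
  have hB : MeasurableSet ({p : ℝ × ℝ | ‖p.1 • u - p.2 • v‖ < ε} ∩ {p | 0 ≤ p.1 ∧ 0 ≤ p.2}) :=
    (measurableSet_lt (by fun_prop) (by fun_prop)).inter
      ((measurableSet_le measurable_const measurable_fst).inter (measurableSet_le measurable_const measurable_snd))
  have hnull : (Ex.prod Ex) {p | ¬ (0 ≤ p.1 ∧ 0 ≤ p.2)} = 0 := by
    have : {p : ℝ × ℝ | ¬ (0 ≤ p.1 ∧ 0 ≤ p.2)} ⊆ (Set.Iio 0) ×ˢ Set.univ ∪ Set.univ ×ˢ (Set.Iio 0) := by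
      intro p hp
      simp only [Set.mem_setOf_eq, not_and_or, not_le] at hp
      simpa using hp
    apply measure_mono_null this
    rw [measure_union_null_iff]
    simp [Measure.prod_prod, Ex_Iio_zero]
  calc (Ex.prod Ex) {p | ‖p.1 • u - p.2 • v‖ < ε}
      ≤ (Ex.prod Ex) ({p : ℝ × ℝ | ‖p.1 • u - p.2 • v‖ < ε} ∩ {p | 0 ≤ p.1 ∧ 0 ≤ p.2})
        + (Ex.prod Ex) {p | ¬ (0 ≤ p.1 ∧ 0 ≤ p.2)} := by
        refine (measure_mono ?_).trans (measure_union_le _ _)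
        intro p hp
        by_cases h : 0 ≤ p.1 ∧ 0 ≤ p.2
        · exact Or.inl ⟨hp, h⟩
        · exact Or.inr h
    _ ≤ ENNReal.ofReal (2 * (ε / s)) * ENNReal.ofReal (2 * ε) := by
        rw [hnull, add_zero]
        apply Ex_strip _ hB 0 (ε / s) ε (fun a => a)
        rintro ⟨a, b⟩ ⟨hab, ha, hb⟩
        have hab : ‖a • u - b • v‖ < ε := hab
        simp only at ha hb ⊢
        have hsq : ‖a • u - b • v‖ ^ 2 = (a - b) ^ 2 + 4 * a * b * s ^ 2 := by
          rw [hs2, ← real_inner_self_eq_norm_sq]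
          simp only [inner_sub_left, inner_sub_right, inner_smul_left, inner_smul_right, huu, hvv, real_inner_comm]
          simp
          ring
        have hlt : (a - b) ^ 2 + 4 * a * b * s ^ 2 ≤ ε ^ 2 := by
          rw [← hsq]; gcongr
        have hab0 : 0 ≤ a * b := mul_nonneg ha hb
        constructor
        · rw [sub_zero, abs_of_nonneg ha, le_div_iff₀ hspos]
          apply le_of_sq_le_sq _ hε.le
          nlinarith [mul_nonneg (sq_nonneg (a - b)) (show 0 ≤ 1 - s ^ 2 by nlinarith), sq_nonneg (b * s), mul_nonneg hab0 (sq_nonneg s)]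
        · rw [abs_sub_comm]
          apply abs_le_of_sq_le_sq _ hε.le
          nlinarith [mul_nonneg hab0 (sq_nonneg s)]
    _ ≤ _ := by
        rw [← ENNReal.ofReal_mul (by positivity)]
        apply ENNReal.ofReal_le_ofReal
        have : ε / s ≤ ε / (w / π) := by gcongr
        calc 2 * (ε / s) * (2 * ε) ≤ 2 * (ε / (w / π)) * (2 * ε) := by gcongr
          _ = _ := by field_simp; ring

lemma Ex_Ici_le {a : ℝ} (ha : 0 ≤ a) : Ex (Set.Ici a) ≤ ENNReal.ofReal (exp (-a)) := by
  have h1 : Ex (Set.Ici a) ≤ Ex {a} + Ex (Set.Iic a)ᶜ := by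
    refine (measure_mono ?_).trans (measure_union_le _ _)
    intro x hx
    rcases (show a ≤ x from hx).eq_or_lt with h | h
    · exact Or.inl h.symm
    · exact Or.inr (by simpa using h)
  have h2 : Ex {a} = 0 := le_antisymm ((Ex_le _).trans (by simp)) (zero_le)
  rw [h2, zero_add, prob_compl_eq_one_sub measurableSet_Iic, Ex_Iic ha, ← ENNReal.ofReal_one,
    ← ENNReal.ofReal_sub _ (by simpa using ha)] at h1
  simpa using h1

lemma Ex_Ioc {a b : ℝ} (ha : 0 ≤ a) (hab : a ≤ b) :
    Ex (Set.Ioc a b) = ENNReal.ofReal (exp (-a) - exp (-b)) := by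
  have hset : Set.Ioc a b = Set.Iic b \ Set.Iic a := by ext x; simp [and_comm]
  rw [hset, measure_diff (Set.Iic_subset_Iic.mpr hab) measurableSet_Iic.nullMeasurableSet
    (measure_ne_top _ _), Ex_Iic ha, Ex_Iic (ha.trans hab), ← ENNReal.ofReal_sub _ (by simpa using ha)]
  congr 1; ring

lemma hit_fixed (u z : E3) (hu : ‖u‖ = 1) {ρ : ℝ} (hρ : 0 < ρ) (hρ2 : ρ ≤ 2) :
    Ex {s | ‖(max 0 (min s ⟪z, u⟫_ℝ)) • u - z‖ < ρ} ≤
      ENNReal.ofReal (4 / ρ) * Ex {s | ‖s • u - z‖ < 2 * ρ} := by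
  set H : Set ℝ := {a | 0 ≤ a ∧ ‖a • u - z‖ < ρ} with hH
  rcases H.eq_empty_or_nonempty with he | hne
  · have : {s | ‖(max 0 (min s ⟪z, u⟫_ℝ)) • u - z‖ < ρ} = ∅ := by
      rw [Set.eq_empty_iff_forall_notMem] at he ⊢
      intro s hs
      exact he _ ⟨le_max_left _ _, hs⟩
    rw [this]; simp
  set a := sInf H with ha
  have hbdd : BddBelow H := ⟨0, fun x hx => hx.1⟩
  have ha0 : 0 ≤ a := le_csInf hne fun x hx => hx.1
  have hau : ‖a • u - z‖ ≤ ρ := by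
    apply le_of_forall_pos_le_add
    intro δ hδ
    obtain ⟨x, hx, hxa⟩ := exists_lt_of_csInf_lt hne (show sInf H < a + δ by linarith)
    have hax : a ≤ x := csInf_le hbdd hx
    calc ‖a • u - z‖ = ‖(x • u - z) + (a - x) • u‖ := by congr 1; module
      _ ≤ ‖x • u - z‖ + ‖(a - x) • u‖ := norm_add_le _ _
      _ ≤ ρ + δ := by
        rw [norm_smul, hu, mul_one, norm_eq_abs, abs_of_nonpos (by linarith)]
        linarith [hx.2]
  have h1 : Ex {s | ‖(max 0 (min s ⟪z, u⟫_ℝ)) • u - z‖ < ρ} ≤ ENNReal.ofReal (exp (-a)) := by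
    refine le_trans ?_ (Ex_Ici_le ha0)
    calc _ ≤ Ex (Set.Iio 0 ∪ Set.Ici a) := by
          apply measure_mono
          intro s hs
          rcases lt_or_ge s 0 with h | h
          · exact Or.inl h
          · refine Or.inr ?_
            have : a ≤ max 0 (min s ⟪z, u⟫_ℝ) := csInf_le hbdd ⟨le_max_left _ _, hs⟩
            exact this.trans (max_le h (min_le_left _ _))
      _ ≤ _ := (measure_union_le _ _).trans (by rw [Ex_Iio_zero, zero_add])
  have h2 : ENNReal.ofReal (exp (-a) - exp (-(a + ρ / 2))) ≤ Ex {s | ‖s • u - z‖ < 2 * ρ} := by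
    rw [← Ex_Ioc ha0 (by linarith)]
    apply measure_mono
    intro s hs
    show ‖s • u - z‖ < 2 * ρ
    calc ‖s • u - z‖ = ‖(a • u - z) + (s - a) • u‖ := by congr 1; module
      _ ≤ ‖a • u - z‖ + ‖(s - a) • u‖ := norm_add_le _ _
      _ < 2 * ρ := by
        rw [norm_smul, hu, mul_one, norm_eq_abs, abs_of_nonneg (by linarith [hs.1])]
        linarith [hs.2]
  refine h1.trans (le_trans ?_ (mul_le_mul_right h2 _))
  rw [← ENNReal.ofReal_mul (by positivity)]
  apply ENNReal.ofReal_le_ofReal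
  rw [neg_add, exp_add]
  have h3 : exp (-(ρ / 2)) ≤ 1 - ρ / 4 := by
    have h4 : exp (-(ρ/2)) = (exp (ρ / 2))⁻¹ := exp_neg _
    have h5 := add_one_le_exp (ρ / 2)
    rw [h4]
    calc (exp (ρ / 2))⁻¹ ≤ (ρ / 2 + 1)⁻¹ := by gcongr
      _ ≤ 1 - ρ / 4 := by
        rw [inv_le_iff_one_le_mul₀ (by positivity)]
        nlinarith
  have h6 := exp_pos (-a)
  rw [div_mul_eq_mul_div, le_div_iff₀ hρ]
  nlinarith

lemma clamp_le (u z : E3) (hu : ‖u‖ = 1) {a s : ℝ} (ha : 0 ≤ a) (has : a ≤ s) :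
    ‖(max 0 (min s ⟪z, u⟫_ℝ)) • u - z‖ ≤ ‖a • u - z‖ := by
  have key : ∀ b : ℝ, ‖b • u - z‖ ^ 2 = (b - ⟪z, u⟫_ℝ) ^ 2 + (‖z‖ ^ 2 - ⟪z, u⟫_ℝ ^ 2) := by
    intro b
    rw [norm_sub_sq_real, norm_smul, hu, inner_smul_left, real_inner_comm]
    simp
    ring
  apply le_of_sq_le_sq _ (norm_nonneg _)
  rw [key, key]
  have : (max 0 (min s ⟪z, u⟫_ℝ) - ⟪z, u⟫_ℝ) ^ 2 ≤ (a - ⟪z, u⟫_ℝ) ^ 2 := by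
    set c := ⟪z, u⟫_ℝ
    rcases le_total s c with h | h
    · rw [min_eq_left h, max_eq_right (by linarith)]; nlinarith
    · rw [min_eq_right h]
      rcases le_total 0 c with h' | h'
      · rw [max_eq_right h']; nlinarith
      · rw [max_eq_left h']; nlinarith
  linarith

open MeasureTheory ProbabilityTheory Real
open scoped ENNReal InnerProductSpace

/-- The σ-algebras generated by the individual flight lengths and velocities. -/
def mmF {Ω : Type} {N : ℕ} (ξ : Fin N → ℕ → Ω → ℝ) (U : Fin N → ℕ → Ω → E3) :
    (Fin N × ℕ) ⊕ (Fin N × ℕ) → MeasurableSpace Ω :=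
  Sum.elim (fun p => MeasurableSpace.comap (ξ p.1 p.2) inferInstance)
    (fun p => MeasurableSpace.comap (U p.1 p.2) inferInstance)

/-- σ-algebra generated by a set of indices. -/
def FsF {Ω : Type} {N : ℕ} (ξ : Fin N → ℕ → Ω → ℝ) (U : Fin N → ℕ → Ω → E3)
    (S : Set ((Fin N × ℕ) ⊕ (Fin N × ℕ))) : MeasurableSpace Ω := ⨆ i ∈ S, mmF ξ U i

structure FlightHyp {Ω : Type} [MeasurableSpace Ω] (μ : Measure Ω) (μS : Measure E3) (N : ℕ)
    (ξ : Fin N → ℕ → Ω → ℝ) (U : Fin N → ℕ → Ω → E3) (v : Fin N → E3) : Prop where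
  pr : IsProbabilityMeasure μ
  prS : IsProbabilityMeasure μS
  hS : μS (Metric.sphere (0 : E3) 1)ᶜ = 0
  hR : ∀ R : E3 ≃ₗᵢ[ℝ] E3, μS.map R = μS
  hv : ∀ j, ‖v j‖ = 1
  mξ : ∀ j k, Measurable (ξ j k)
  mU : ∀ j k, Measurable (U j k)
  hU0 : ∀ j, U j 0 = fun _ => v j
  ind : iIndep (mmF ξ U) μ
  lξ : ∀ j k, μ.map (ξ j k) = Ex
  lU : ∀ j k, 1 ≤ k → μ.map (U j k) = μS

/-- block sum -/
noncomputable def blk {Ω : Type} (ξ : ℕ → Ω → ℝ) (U : ℕ → Ω → E3) (a b : ℕ) (ω : Ω) : E3 :=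
  ∑ l ∈ Finset.Ico a b, ξ l ω • U l ω

/-- trajectory/time index -/
def ixF {N : ℕ} (i : (Fin N × ℕ) ⊕ (Fin N × ℕ)) : Fin N × ℕ := Sum.elim id id i

def SB {N : ℕ} (j : Fin N) (a b : ℕ) : Set ((Fin N × ℕ) ⊕ (Fin N × ℕ)) :=
  {i | (ixF i).1 = j ∧ a ≤ (ixF i).2 ∧ (ixF i).2 < b}

section
variable {Ω : Type} [mΩ : MeasurableSpace Ω] {μ : Measure Ω} {μS : Measure E3} {N : ℕ}
    {ξ : Fin N → ℕ → Ω → ℝ} {U : Fin N → ℕ → Ω → E3} {v : Fin N → E3}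

lemma FlightHyp.mm_le (h : FlightHyp μ μS N ξ U v) (i) : mmF ξ U i ≤ mΩ := by
  rcases i with p | p
  · exact (h.mξ p.1 p.2).comap_le
  · exact (h.mU p.1 p.2).comap_le

lemma FlightHyp.indep (h : FlightHyp μ μS N ξ U v) {γ δ : Type} [MeasurableSpace γ]
    [MeasurableSpace δ] {X : Ω → γ} {Y : Ω → δ} {S T : Set ((Fin N × ℕ) ⊕ (Fin N × ℕ))}
    (hX : Measurable[FsF ξ U S] X) (hY : Measurable[FsF ξ U T] Y) (hd : Disjoint S T) :
    IndepFun X Y μ := by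
  have := indep_iSup_of_disjoint h.mm_le h.ind hd
  rw [IndepFun_iff_Indep]
  exact indep_of_indep_of_le_left (indep_of_indep_of_le_right this hY.comap_le) hX.comap_le

lemma Fs_le (h : FlightHyp μ μS N ξ U v) (S) : FsF ξ U S ≤ mΩ :=
  iSup₂_le fun i _ => h.mm_le i

lemma Fs_mono {S T : Set ((Fin N × ℕ) ⊕ (Fin N × ℕ))} (h : S ⊆ T) : FsF ξ U S ≤ FsF ξ U T :=
  biSup_mono h

lemma meas_xi {S : Set ((Fin N × ℕ) ⊕ (Fin N × ℕ))} {j k} (h : Sum.inl (j, k) ∈ S) :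
    Measurable[FsF ξ U S] (ξ j k) := by
  apply Measurable.of_comap_le
  exact le_iSup₂_of_le (f := fun i (_ : i ∈ S) => mmF ξ U i) _ h le_rfl

lemma meas_U {S : Set ((Fin N × ℕ) ⊕ (Fin N × ℕ))} {j k} (h : Sum.inr (j, k) ∈ S) :
    Measurable[FsF ξ U S] (U j k) := by
  apply Measurable.of_comap_le
  exact le_iSup₂_of_le (f := fun i (_ : i ∈ S) => mmF ξ U i) _ h le_rfl

lemma meas_blk {S : Set ((Fin N × ℕ) ⊕ (Fin N × ℕ))} {j a b} (h : SB j a b ⊆ S) :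
    Measurable[FsF ξ U S] (blk (ξ j) (U j) a b) := by
  unfold blk
  refine Finset.measurable_sum _ fun l hl => ?_
  rw [Finset.mem_Ico] at hl
  exact Measurable.smul (meas_xi (h (by simp [SB, ixF, hl]))) (meas_U (h (by simp [SB, ixF, hl])))

/-- only flight lengths -/
lemma meas_theta {S : Set ((Fin N × ℕ) ⊕ (Fin N × ℕ))} {j b} (h : SB j 0 b ⊆ S) :
    Measurable[FsF ξ U S] (fun ω => ∑ l ∈ Finset.range b, ξ j l ω) := by
  refine Finset.measurable_sum _ fun l hl => ?_
  rw [Finset.mem_range] at hl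
  exact (meas_xi (h (by simp [SB, ixF, hl])))

lemma SB_disj {j : Fin N} {a b c d : ℕ} (h : b ≤ c) : Disjoint (SB j a b) (SB j c d) := by
  rw [Set.disjoint_left]
  rintro i ⟨_, _, h2⟩ ⟨_, h3, _⟩
  omega

lemma SB_disj' {i j : Fin N} {a b c d : ℕ} (h : i ≠ j) : Disjoint (SB i a b) (SB j c d) := by
  rw [Set.disjoint_left]
  rintro x ⟨h1, _, h2⟩ ⟨h3, _⟩
  exact h (h1.symm.trans h3)

lemma blk_add {ξ : ℕ → Ω → ℝ} {U : ℕ → Ω → E3} {a b c : ℕ} (h : a ≤ b) (h' : b ≤ c) (ω : Ω) :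
    blk ξ U a b ω + blk ξ U b c ω = blk ξ U a c ω :=
  Finset.sum_Ico_consecutive _ h h'

lemma blk_one {ξ : ℕ → Ω → ℝ} {U : ℕ → Ω → E3} {a : ℕ}  (ω : Ω) :
    blk ξ U a (a+1) ω = ξ a ω • U a ω := by simp [blk]

lemma blk_succ {ξ : ℕ → Ω → ℝ} {U : ℕ → Ω → E3} {a b : ℕ} (h : a ≤ b) (ω : Ω) :
    blk ξ U a (b+1) ω = blk ξ U a b ω + ξ b ω • U b ω := by
  rw [← blk_add h (Nat.le_succ b), blk_one]

/-- disintegration of an event along independent variables -/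
lemma cond_lint {γ δ : Type} [MeasurableSpace γ] [MeasurableSpace δ] [IsProbabilityMeasure μ]
    {Y : Ω → γ} {V : Ω → δ}
    (hY : Measurable Y) (hV : Measurable V) (hi : IndepFun Y V μ) {B : Set (γ × δ)}
    (hB : MeasurableSet B) :
    μ {ω | (Y ω, V ω) ∈ B} = ∫⁻ ω, (μ.map V) (Prod.mk (Y ω) ⁻¹' B) ∂μ := by
  have := (indepFun_iff_map_prod_eq_prod_map_map hY.aemeasurable hV.aemeasurable).mp hi
  have h2 : μ {ω | (Y ω, V ω) ∈ B} = (μ.map (fun ω => (Y ω, V ω))) B := by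
    rw [Measure.map_apply (hY.prodMk hV) hB]; rfl
  have _hp : IsProbabilityMeasure (μ.map V) := Measure.isProbabilityMeasure_map hV.aemeasurable
  rw [h2, this, Measure.prod_apply hB, lintegral_map (measurable_measure_prodMk_left hB) hY]

lemma cond_lint_fun {γ δ : Type} [MeasurableSpace γ] [MeasurableSpace δ] [IsProbabilityMeasure μ]
    {Y : Ω → γ} {V : Ω → δ}
    (hY : Measurable Y) (hV : Measurable V) (hi : IndepFun Y V μ) {f : γ × δ → ℝ≥0∞}
    (hf : Measurable f) :
    ∫⁻ ω, f (Y ω, V ω) ∂μ = ∫⁻ ω, ∫⁻ u, f (Y ω, u) ∂(μ.map V) ∂μ := by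
  have := (indepFun_iff_map_prod_eq_prod_map_map hY.aemeasurable hV.aemeasurable).mp hi
  have _hp : IsProbabilityMeasure (μ.map V) := Measure.isProbabilityMeasure_map hV.aemeasurable
  rw [← lintegral_map hf (hY.prodMk hV), this, lintegral_prod _ hf.aemeasurable,
    lintegral_map (hf.lintegral_prod_right' (ν := μ.map V)) hY]

lemma cond_le {γ δ : Type} [MeasurableSpace γ] [MeasurableSpace δ] [IsProbabilityMeasure μ]
    {Y : Ω → γ} {V : Ω → δ}
    (hY : Measurable Y) (hV : Measurable V) (hi : IndepFun Y V μ) {A : Set γ}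
    (hA : MeasurableSet A) {B : Set (γ × δ)}
    (hB : MeasurableSet B) {c : ℝ≥0∞} (hc : ∀ y, μ {ω | (y, V ω) ∈ B} ≤ c) :
    μ {ω | Y ω ∈ A ∧ (Y ω, V ω) ∈ B} ≤ μ {ω | Y ω ∈ A} * c := by
  have h1 : MeasurableSet (B ∩ (Prod.fst ⁻¹' A)) := hB.inter (measurable_fst hA)
  have h2 := cond_lint hY hV hi h1
  have h3 : {ω | Y ω ∈ A ∧ (Y ω, V ω) ∈ B} = {ω | (Y ω, V ω) ∈ B ∩ (Prod.fst ⁻¹' A)} := by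
    ext ω; simp [and_comm]
  rw [h3, h2]
  calc _ ≤ ∫⁻ ω, (Y ⁻¹' A).indicator (fun _ => c) ω ∂μ := by
        refine lintegral_mono fun ω => ?_
        by_cases hω : Y ω ∈ A
        · rw [Set.indicator_of_mem (by exact hω), Measure.map_apply hV (measurable_prodMk_left h1)]
          exact (measure_mono (fun x hx => hx.1)).trans (hc (Y ω))
        · have : Prod.mk (Y ω) ⁻¹' (B ∩ (Prod.fst ⁻¹' A)) = ∅ := by
            ext x; simp [hω]
          rw [this]; simp
    _ = _ := by
      rw [lintegral_indicator (hY hA), setLIntegral_const, mul_comm]; rfl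

lemma ae_normU (h : FlightHyp μ μS N ξ U v) (j k) : ∀ᵐ ω ∂μ, ‖U j k ω‖ = 1 := by
  have := h.prS
  rcases Nat.eq_zero_or_pos k with rfl | hk
  · rw [h.hU0]; exact Filter.Eventually.of_forall fun _ => h.hv j
  · have := ae_norm μS h.hS
    rw [← h.lU j k hk] at this
    exact ae_of_ae_map (h.mU j k).aemeasurable this

/-- hitting probability of a segment versus position after scattering -/
lemma hit_prob (h : FlightHyp μ μS N ξ U v) {γ : Type} [MeasurableSpace γ] (j : Fin N) (m : ℕ)
    {V Z : Ω → E3} {θ : Ω → γ} {A : Set γ} (hA : MeasurableSet A)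
    (mV : Measurable[FsF ξ U {Sum.inl (j, m)}ᶜ] V)
    (mZ : Measurable[FsF ξ U {Sum.inl (j, m)}ᶜ] Z)
    (mθ : Measurable[FsF ξ U {Sum.inl (j, m)}ᶜ] θ) (hV : ∀ᵐ ω ∂μ, ‖V ω‖ = 1)
    {ρ : ℝ} (hρ : 0 < ρ) (hρ2 : ρ ≤ 2) :
    μ {ω | θ ω ∈ A ∧ ∃ a, 0 ≤ a ∧ a ≤ ξ j m ω ∧ ‖a • V ω - Z ω‖ < ρ} ≤
      ENNReal.ofReal (4 / ρ) * μ {ω | θ ω ∈ A ∧ ‖ξ j m ω • V ω - Z ω‖ < 2 * ρ} := by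
  have := h.pr
  have mY : Measurable[FsF ξ U {Sum.inl (j, m)}ᶜ] (fun ω => (V ω, Z ω, θ ω)) :=
    mV.prodMk (mZ.prodMk mθ)
  have mX : Measurable[FsF ξ U {Sum.inl (j, m)}] (ξ j m) := meas_xi rfl
  have hi := h.indep mY mX disjoint_compl_left
  have mY' := mY.mono (Fs_le h _) le_rfl
  set B' : Set ((E3 × E3 × γ) × ℝ) := {p | p.1.2.2 ∈ A ∧ ‖p.2 • p.1.1 - p.1.2.1‖ < 2 * ρ} with hB'
  set B : Set ((E3 × E3 × γ) × ℝ) := {p | p.1.2.2 ∈ A ∧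
    ‖(max 0 (min p.2 ⟪p.1.2.1, p.1.1⟫_ℝ)) • p.1.1 - p.1.2.1‖ < ρ} with hB
  have hAm : MeasurableSet {p : (E3 × E3 × γ) × ℝ | p.1.2.2 ∈ A} :=
    (measurable_snd.comp (measurable_snd.comp measurable_fst)) hA
  have mB : MeasurableSet B := by
    refine hAm.inter (s₂ := {p | ‖(max 0 (min p.2 ⟪p.1.2.1, p.1.1⟫_ℝ)) • p.1.1 - p.1.2.1‖ < ρ}) (measurableSet_lt ?_ measurable_const)
    fun_prop
  have mB' : MeasurableSet B' := by
    refine hAm.inter (s₂ := {p | ‖p.2 • p.1.1 - p.1.2.1‖ < 2 * ρ}) (measurableSet_lt ?_ measurable_const)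
    fun_prop
  have e := cond_lint mY' (h.mξ j m) hi mB
  have e' := cond_lint mY' (h.mξ j m) hi mB'
  rw [h.lξ] at e e'
  calc _ ≤ μ {ω | ((V ω, Z ω, θ ω), ξ j m ω) ∈ B} := by
        apply measure_mono_ae
        filter_upwards [hV] with ω hω
        rintro ⟨h1, a, ha, has, hlt⟩
        exact ⟨h1, (clamp_le _ _ hω ha has).trans_lt hlt⟩
    _ = _ := e
    _ ≤ ∫⁻ ω, ENNReal.ofReal (4 / ρ) * Ex (Prod.mk (V ω, Z ω, θ ω) ⁻¹' B') ∂μ := by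
        apply lintegral_mono_ae
        filter_upwards [hV] with ω hω
        by_cases h1 : θ ω ∈ A
        · have := hit_fixed (V ω) (Z ω) hω hρ hρ2
          simpa [hB, hB', h1, Set.preimage] using this
        · have : Prod.mk (V ω, Z ω, θ ω) ⁻¹' B = ∅ := by
            ext x; simp [hB, h1]
          rw [this]; simp
    _ = _ := by
      have m3 : Measurable (fun ω => Ex (Prod.mk (V ω, Z ω, θ ω) ⁻¹' B')) :=
        (measurable_measure_prodMk_left mB').comp mY'
      rw [lintegral_const_mul _ m3, ← e']
      rfl
end

open MeasureTheory ProbabilityTheory Real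
open scoped ENNReal InnerProductSpace

noncomputable def bnd (ε : ℝ) (n : ℕ) : ℝ≥0∞ :=
  if n < 4 then ENNReal.ofReal (4 * cSin * ε ^ 2) else ENNReal.ofReal (ε ^ 3) * aN n

section
variable {Ω : Type} [mΩ : MeasurableSpace Ω] {μ : Measure Ω} {μS : Measure E3} {N : ℕ}
    {ξ : Fin N → ℕ → Ω → ℝ} {U : Fin N → ℕ → Ω → E3} {v : Fin N → E3}

lemma meas_blk' (h : FlightHyp μ μS N ξ U v) (j a b) : Measurable (blk (ξ j) (U j) a b) :=
  (meas_blk (S := SB j a b) le_rfl).mono (Fs_le h _) le_rfl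

lemma small_conc (h : FlightHyp μ μS N ξ U v) (j : Fin N) (a b : ℕ) (hab : a + 2 ≤ b) (y : E3)
    {ε : ℝ} (hε : 0 < ε) :
    μ {ω | ‖blk (ξ j) (U j) a b ω - y‖ < ε} ≤ ENNReal.ofReal (4 * cSin * ε ^ 2) := by
  have := h.pr
  have := h.prS
  let S : Set ((Fin N × ℕ) ⊕ (Fin N × ℕ)) := {Sum.inl (j, a), Sum.inl (j, a + 1)}
  have mY : Measurable[FsF ξ U Sᶜ] (fun ω => (U j a ω, U j (a+1) ω, blk (ξ j) (U j) (a+2) b ω)) := by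
    refine (meas_U (by simp [S])).prodMk ((meas_U (by simp [S])).prodMk (meas_blk ?_))
    rintro (⟨i, l⟩ | ⟨i, l⟩) hi
    · simp only [SB, ixF, Set.mem_setOf_eq, Sum.elim_inl, id] at hi
      simp only [S, Set.mem_compl_iff, Set.mem_insert_iff, Set.mem_singleton_iff, Sum.inl.injEq,
        Prod.mk.injEq, not_or]
      omega
    · simp [S]
  have mV : Measurable[FsF ξ U S] (fun ω => (ξ j a ω, ξ j (a+1) ω)) :=
    (meas_xi (by simp [S])).prodMk (meas_xi (by simp [S]))
  have hi := h.indep mY mV disjoint_compl_left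
  have mY' := mY.mono (Fs_le h _) le_rfl
  have mV' := mV.mono (Fs_le h _) le_rfl
  have lV : μ.map (fun ω => (ξ j a ω, ξ j (a+1) ω)) = Ex.prod Ex := by
    have h1 : IndepFun (ξ j a) (ξ j (a+1)) μ :=
      h.indep (S := {Sum.inl (j, a)}) (T := {Sum.inl (j, a + 1)}) (meas_xi rfl) (meas_xi rfl)
        (by simp)
    rw [(indepFun_iff_map_prod_eq_prod_map_map (h.mξ _ _).aemeasurable
      (h.mξ _ _).aemeasurable).mp h1, h.lξ, h.lξ]
  let B : Set ((E3 × E3 × E3) × (ℝ × ℝ)) :=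
    {p | ‖p.2.1 • p.1.1 + p.2.2 • p.1.2.1 - (y - p.1.2.2)‖ < ε}
  have mB : MeasurableSet B := measurableSet_lt (by fun_prop) measurable_const
  have e := cond_lint mY' mV' hi mB
  rw [lV] at e
  have e2 : μ {ω | ‖blk (ξ j) (U j) a b ω - y‖ < ε} =
      μ {ω | ((U j a ω, U j (a+1) ω, blk (ξ j) (U j) (a+2) b ω), (ξ j a ω, ξ j (a+1) ω)) ∈ B} := by
    congr 1
    ext ω
    simp only [Set.mem_setOf_eq, B]
    rw [← blk_add (show a ≤ a + 2 by omega) hab, ← blk_add (show a ≤ a + 1 by omega)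
      (show a + 1 ≤ a + 2 by omega), blk_one, blk_one]
    congr! 2
    abel
  rw [e2, e]
  have hi2 : IndepFun (U j a) (U j (a+1)) μ :=
      h.indep (S := {Sum.inr (j, a)}) (T := {Sum.inr (j, a + 1)}) (meas_U rfl) (meas_U rfl)
        (by simp)
  let f : E3 × E3 → ℝ≥0∞ := fun p => (ENNReal.ofReal (√(1 - ⟪p.1, p.2⟫_ℝ ^ 2)))⁻¹
  have mf : Measurable f := by fun_prop
  have e3 := cond_lint_fun (h.mU j a) (h.mU j (a+1)) hi2 mf
  rw [h.lU j (a+1) (by omega)] at e3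
  calc _ ≤ ∫⁻ ω, ENNReal.ofReal (4 * ε ^ 2) * f (U j a ω, U j (a+1) ω) ∂μ := by
        apply lintegral_mono_ae
        filter_upwards [ae_normU h j a, ae_normU h j (a+1)] with ω h1 h2
        have h3 := two_fixed (U j a ω) (U j (a+1) ω) (y - blk (ξ j) (U j) (a+2) b ω) h1 h2 hε
        have h4 : Prod.mk (U j a ω, U j (a+1) ω, blk (ξ j) (U j) (a+2) b ω) ⁻¹' B =
          {p | ‖p.1 • U j a ω + p.2 • U j (a+1) ω - (y - blk (ξ j) (U j) (a+2) b ω)‖ < ε} := by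
          ext p; rfl
        rw [h4]
        exact h3
    _ = ENNReal.ofReal (4 * ε ^ 2) * ∫⁻ ω, f (U j a ω, U j (a+1) ω) ∂μ :=
        lintegral_const_mul _ (mf.comp ((h.mU _ _).prodMk (h.mU _ _)))
    _ ≤ ENNReal.ofReal (4 * ε ^ 2) * ∫⁻ ω, ENNReal.ofReal cSin ∂μ := by
        rw [e3]
        gcongr 1
        apply lintegral_mono_ae
        filter_upwards [ae_normU h j a] with ω h1
        exact est2 μS h.hS h.hR _ h1
    _ = _ := by
        rw [lintegral_const, measure_univ, mul_one, ← ENNReal.ofReal_mul (by positivity)]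
        congr 1; ring

lemma charFun_blk (h : FlightHyp μ μS N ξ U v) (j : Fin N) (a n : ℕ) (t : E3) (ht : t ≠ 0) :
    ‖charFun (μ.map (blk (ξ j) (U j) a (a + 1 + n))) t‖ ≤ gB ‖t‖ ^ n := by
  have := h.pr
  have := h.prS
  induction n with
  | zero =>
    have := Measure.isProbabilityMeasure_map (μ := μ) (meas_blk' h j a (a+1+0)).aemeasurable
    simpa using norm_charFun_le_one (μ := μ.map (blk (ξ j) (U j) a (a + 1 + 0))) t
  | succ n ih =>
    have h1 : blk (ξ j) (U j) a (a + 1 + (n+1)) =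
        blk (ξ j) (U j) a (a + 1 + n) + (fun ω => ξ j (a+1+n) ω • U j (a+1+n) ω) := by
      ext1 ω
      exact blk_succ (show a ≤ a + 1 + n by omega) ω
    have hi : IndepFun (blk (ξ j) (U j) a (a + 1 + n)) (blk (ξ j) (U j) (a+1+n) (a + 1 + n + 1)) μ :=
      h.indep (meas_blk le_rfl) (meas_blk le_rfl) (SB_disj le_rfl)
    have h2 : blk (ξ j) (U j) (a+1+n) (a + 1 + n + 1) =
      (fun ω => ξ j (a+1+n) ω • U j (a+1+n) ω) := by ext1 ω; exact blk_one ω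
    have hi2 : IndepFun (ξ j (a+1+n)) (U j (a+1+n)) μ :=
      h.indep (S := {Sum.inl (j, a+1+n)}) (T := {Sum.inr (j, a + 1+n)}) (meas_xi rfl) (meas_U rfl)
        (by simp)
    have l2 := (indepFun_iff_map_prod_eq_prod_map_map (h.mξ _ _).aemeasurable
      (h.mU _ _).aemeasurable).mp hi2
    rw [h.lξ, h.lU _ _ (by omega)] at l2
    have l3 : μ.map (fun ω => ξ j (a+1+n) ω • U j (a+1+n) ω) =
        (Ex.prod μS).map (fun p => p.1 • p.2) := by
      rw [← l2, Measure.map_map (by fun_prop) ((h.mξ _ _).prodMk (h.mU _ _))]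
      rfl
    rw [h2] at hi
    have m2 : Measurable (fun ω => ξ j (a+1+n) ω • U j (a+1+n) ω) := (h.mξ _ _).smul (h.mU _ _)
    rw [h1, hi.charFun_map_add_eq_mul (meas_blk' h _ _ _).aemeasurable m2.aemeasurable, Pi.mul_apply, norm_mul, l3,
      charFun_flight μS h.hR, pow_succ]
    have := phi_nonneg μS t
    have h3 := phi_le μS h.hS h.hR t ht
    have h4 : ‖((phi μS t : ℝ) : ℂ)‖ = phi μS t := by
      rw [Complex.norm_real, Real.norm_eq_abs, abs_of_nonneg this]
    rw [h4]
    exact mul_le_mul ih h3 this (pow_nonneg (this.trans h3) _)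

lemma blk_conc (h : FlightHyp μ μS N ξ U v) (j : Fin N) (a n : ℕ) (y : E3)
    {ε : ℝ} (hε : 0 < ε) :
    μ {ω | ‖blk (ξ j) (U j) a (a + 2 + n) ω - y‖ < ε} ≤ bnd ε (n + 1) := by
  have := h.pr
  unfold bnd
  split_ifs with hn
  · exact small_conc h j a _ (by omega) y hε
  · have := Measure.isProbabilityMeasure_map (μ := μ) (meas_blk' h j a (a+2+n)).aemeasurable
    have h1 := conc_fourier (μ.map (blk (ξ j) (U j) a (a + 2 + n))) (n+1) (fun t ht => by
      have := charFun_blk h j a (n+1) t ht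
      rwa [show a + 1 + (n + 1) = a + 2 + n by ring] at this) y hε
    rwa [Measure.map_apply (meas_blk' h _ _ _) (measurableSet_lt (by fun_prop) measurable_const)] at h1

lemma theta_laplace (h : FlightHyp μ μS N ξ U v) (j : Fin N) (k : ℕ) {l : ℝ} (hl : 0 < l) :
    ∫⁻ ω, ENNReal.ofReal (exp (-l * ∑ i ∈ Finset.range k, ξ j i ω)) ∂μ = ENNReal.ofReal (1 / (1 + l)) ^ k := by
  have := h.pr
  induction k with
  | zero => simp
  | succ k ih =>
    have hi : IndepFun (fun ω => ∑ i ∈ Finset.range k, ξ j i ω) (ξ j k) μ :=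
      h.indep (meas_theta (S := SB j 0 k) le_rfl) (meas_xi (S := SB j k (k+1)) (by simp [SB, ixF])) (SB_disj le_rfl)
    have hi2 := hi.comp (φ := fun x => ENNReal.ofReal (exp (-l * x)))
      (ψ := fun x => ENNReal.ofReal (exp (-l * x))) (by fun_prop) (by fun_prop)
    have hm : Measurable (fun ω => ∑ i ∈ Finset.range k, ξ j i ω) :=
      Finset.measurable_sum _ fun i _ => h.mξ j i
    have e := lintegral_mul_eq_lintegral_mul_lintegral_of_indepFun (by fun_prop)
      (Measurable.comp (by fun_prop) (h.mξ j k)) hi2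
    simp only [Pi.mul_apply, Function.comp] at e
    rw [ih] at e
    have e2 : ∫⁻ ω, ENNReal.ofReal (exp (-l * ξ j k ω)) ∂μ = ENNReal.ofReal (1 / (1 + l)) := by
      rw [← Ex_laplace hl, ← h.lξ j k, lintegral_map (by fun_prop) (h.mξ j k)]
    rw [e2] at e
    rw [pow_succ, ← e]
    congr 1
    ext ω
    rw [← ENNReal.ofReal_mul (exp_pos _).le, ← exp_add, Finset.sum_range_succ]
    congr 2; ring

lemma theta_sum (h : FlightHyp μ μS N ξ U v) (j : Fin N) {T : ℝ} (hT : 1 ≤ T) :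
    ∑' k, μ {ω | ∑ i ∈ Finset.range k, ξ j i ω ≤ T} ≤ ENNReal.ofReal (2 * exp 1 * T) := by
  have hl : 0 < 1 / T := by positivity
  have h1 : ∀ k, μ {ω | ∑ i ∈ Finset.range k, ξ j i ω ≤ T} ≤
      ENNReal.ofReal (exp 1) * ENNReal.ofReal (1 / (1 + 1 / T)) ^ k := by
    intro k
    rw [← theta_laplace h j k hl]
    have hm : Measurable (fun ω => ∑ i ∈ Finset.range k, ξ j i ω) :=
      Finset.measurable_sum _ fun i _ => h.mξ j i
    rw [← lintegral_const_mul _ (by fun_prop)]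
    rw [← lintegral_indicator_one (measurableSet_le hm measurable_const)]
    refine lintegral_mono fun ω => ?_
    by_cases hω : ω ∈ {ω | ∑ i ∈ Finset.range k, ξ j i ω ≤ T}
    · rw [Set.indicator_of_mem hω, ← ENNReal.ofReal_mul (exp_pos _).le, ← exp_add, Pi.one_apply,
        ← ENNReal.ofReal_one]
      apply ENNReal.ofReal_le_ofReal
      apply one_le_exp
      have h0 : ∑ i ∈ Finset.range k, ξ j i ω ≤ T := hω
      have : 1 / T * ∑ i ∈ Finset.range k, ξ j i ω ≤ 1 := by
        rw [div_mul_eq_mul_div, one_mul, div_le_one (by positivity)]; exact h0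
      linarith
    · rw [Set.indicator_of_notMem hω]; exact zero_le
  calc _ ≤ ∑' k, ENNReal.ofReal (exp 1) * ENNReal.ofReal (1 / (1 + 1 / T)) ^ k :=
        ENNReal.tsum_le_tsum h1
    _ = ENNReal.ofReal (exp 1) * ENNReal.ofReal (T + 1) := by
        rw [ENNReal.tsum_mul_left, ENNReal.tsum_geometric, ← ENNReal.ofReal_one,
          ← ENNReal.ofReal_sub _ (by positivity), ← ENNReal.ofReal_inv_of_pos]
        · congr 2; field_simp; ring
        · rw [sub_pos, div_lt_one (by positivity)]; linarith
    _ ≤ _ := by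
        rw [← ENNReal.ofReal_mul (exp_pos _).le]
        apply ENNReal.ofReal_le_ofReal
        nlinarith [exp_pos 1]
end

noncomputable def b1 (ε : ℝ) (n : ℕ) : ℝ≥0∞ := if 1 ≤ n then bnd ε n else 0
noncomputable def b4 (ε : ℝ) (n : ℕ) : ℝ≥0∞ := if 4 ≤ n then bnd ε n else 0

noncomputable def Kb : ℝ := 12 * cSin + 4 * (∑' n, aN (n + 4)).toReal

lemma Kb_nonneg : 0 ≤ Kb := by
  have := cSin_nonneg
  unfold Kb; positivity

lemma b4_sum {ε : ℝ} (hε : 0 < ε) : ∑' n, b4 ε n = ENNReal.ofReal (ε ^ 3 * (∑' n, aN (n + 4)).toReal) := by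
  have : ∑' n, b4 ε n = ∑' n, ENNReal.ofReal (ε ^ 3) * aN (n + 4) := by
    rw [← ENNReal.summable.sum_add_tsum_nat_add' (k := 4)]
    simp [Finset.sum_range_succ, b4, bnd]
  rw [this, ENNReal.tsum_mul_left, ENNReal.ofReal_mul (by positivity), ENNReal.ofReal_toReal aN_sum.ne]

lemma b4_le {ε : ℝ} (hε : 0 < ε) : ∑' n, b4 ε n ≤ ENNReal.ofReal (Kb * ε ^ 3) := by
  rw [b4_sum hε]
  apply ENNReal.ofReal_le_ofReal
  rw [mul_comm]
  have := cSin_nonneg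
  gcongr
  unfold Kb
  nlinarith [ENNReal.toReal_nonneg (a := ∑' n, aN (n + 4))]

lemma b1_le {ε : ℝ} (hε : 0 < ε) (h4 : ε ≤ 4) : ∑' n, b1 ε n ≤ ENNReal.ofReal (Kb * ε ^ 2) := by
  have h1 : ∀ n, b1 ε n ≤ (if n ∈ ({1,2,3} : Finset ℕ) then ENNReal.ofReal (4 * cSin * ε ^ 2) else 0) + b4 ε n := by
    intro n
    unfold b1 b4
    by_cases h : 4 ≤ n
    · simp [h, show 1 ≤ n by omega]
    · by_cases h' : 1 ≤ n
      · have : n ∈ ({1,2,3} : Finset ℕ) := by simp; omega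
        simp only [this, h, h', if_true, if_false, add_zero]
        simp [bnd, show n < 4 by omega]
      · simp [h']
  have hc := cSin_nonneg
  calc _ ≤ _ := ENNReal.tsum_le_tsum h1
    _ = 3 * ENNReal.ofReal (4 * cSin * ε ^ 2) + ENNReal.ofReal (ε ^ 3 * (∑' n, aN (n + 4)).toReal) := by
      rw [ENNReal.tsum_add, b4_sum hε, tsum_eq_sum (s := {1,2,3})]
      · rw [Finset.sum_congr rfl (fun x hx => if_pos hx)]
        simp
      · intro b hb; simp only [hb, if_false]
    _ ≤ _ := by
      rw [show (3 : ℝ≥0∞) = ENNReal.ofReal 3 by simp, ← ENNReal.ofReal_mul (by positivity),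
        ← ENNReal.ofReal_add (by positivity) (by positivity)]
      apply ENNReal.ofReal_le_ofReal
      unfold Kb
      have h0 := ENNReal.toReal_nonneg (a := ∑' n, aN (n + 4))
      have : ε ^ 3 ≤ 4 * ε ^ 2 := by nlinarith [sq_nonneg ε]
      nlinarith [mul_le_mul_of_nonneg_right this h0]

open MeasureTheory ProbabilityTheory Real
open scoped ENNReal InnerProductSpace

section
variable {Ω : Type} [mΩ : MeasurableSpace Ω] {μ : Measure Ω} {μS : Measure E3} {N : ℕ}
    {ξ : Fin N → ℕ → Ω → ℝ} {U : Fin N → ℕ → Ω → E3} {v : Fin N → E3}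

lemma SB_sub_compl {i j : Fin N} {a b m : ℕ} (h : i ≠ j ∨ b ≤ m ∨ m < a) :
    SB i a b ⊆ {Sum.inl (j, m)}ᶜ := by
  rintro (⟨i', l⟩ | ⟨i', l⟩) hi
  · simp only [SB, ixF, Set.mem_setOf_eq, Sum.elim_inl, id] at hi
    simp only [Set.mem_compl_iff, Set.mem_singleton_iff, Sum.inl.injEq, Prod.mk.injEq, not_and]
    rintro rfl rfl
    rcases h with h | h | h
    · exact h hi.1.symm
    · omega
    · omega
  · simp

lemma theta_blk (h : FlightHyp μ μS N ξ U v) (j : Fin N) (a n : ℕ) (T : ℝ) {ε : ℝ} (hε : 0 < ε) :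
    μ {ω | ∑ i ∈ Finset.range a, ξ j i ω ∈ Set.Iic T ∧ ‖blk (ξ j) (U j) a (a + 2 + n) ω‖ < ε} ≤
      μ {ω | ∑ i ∈ Finset.range a, ξ j i ω ≤ T} * bnd ε (n + 1) := by
  have := h.pr
  have hi : IndepFun (fun ω => ∑ i ∈ Finset.range a, ξ j i ω) (blk (ξ j) (U j) a (a + 2 + n)) μ :=
    h.indep (meas_theta (S := SB j 0 a) le_rfl) (meas_blk le_rfl) (SB_disj le_rfl)
  have mB : MeasurableSet {p : ℝ × E3 | ‖p.2‖ < ε} := measurableSet_lt (by fun_prop) measurable_const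
  exact cond_le (Finset.measurable_sum _ fun i _ => h.mξ j i) (meas_blk' h j _ _) hi measurableSet_Iic mB
    (c := bnd ε (n + 1)) (fun y => by simpa using blk_conc h j a n 0 hε)

lemma self_fwd (h : FlightHyp μ μS N ξ U v) (j : Fin N) (k n : ℕ) (T : ℝ) {ρ : ℝ} (hρ : 0 < ρ)
    (hρ2 : ρ ≤ 2) :
    μ {ω | ∑ i ∈ Finset.range k, ξ j i ω ≤ T ∧ ∃ a, 0 ≤ a ∧ a ≤ ξ j (k + 1 + n) ω ∧
      ‖blk (ξ j) (U j) 0 (k + 1 + n) ω + a • U j (k + 1 + n) ω - blk (ξ j) (U j) 0 k ω‖ < ρ} ≤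
    ENNReal.ofReal (4 / ρ) * (μ {ω | ∑ i ∈ Finset.range k, ξ j i ω ≤ T} * bnd (2 * ρ) (n + 1)) := by
  have h1 := hit_prob h j (k + 1 + n) (V := U j (k+1+n)) (Z := fun ω => -blk (ξ j) (U j) k (k+1+n) ω)
    (θ := fun ω => ∑ i ∈ Finset.range k, ξ j i ω) (A := Set.Iic T) measurableSet_Iic
    (meas_U (by simp)) (meas_blk (SB_sub_compl (by omega))).neg (meas_theta (SB_sub_compl (by omega)))
    (ae_normU h _ _) hρ hρ2
  have h2 := theta_blk h j k n T (show 0 < 2 * ρ by positivity)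
  refine (measure_mono ?_).trans (h1.trans (mul_le_mul_right ((measure_mono ?_).trans h2) _))
  · rintro ω ⟨h3, a, h4, h5, h6⟩
    refine ⟨h3, a, h4, h5, ?_⟩
    rw [← blk_add (show 0 ≤ k by omega) (show k ≤ k + 1 + n by omega)] at h6
    convert h6 using 2
    abel
  · rintro ω ⟨h3, h4⟩
    refine ⟨h3, ?_⟩
    rw [show k + 2 + n = k + 1 + n + 1 by ring, blk_succ (show k ≤ k + 1 + n by omega)]
    convert h4 using 2
    abel

lemma self_bwd (h : FlightHyp μ μS N ξ U v) (j : Fin N) (m n : ℕ) (T : ℝ) {ρ : ℝ} (hρ : 0 < ρ)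
    (hρ2 : ρ ≤ 2) :
    μ {ω | ∑ i ∈ Finset.range m, ξ j i ω ≤ T ∧ ∃ a, 0 ≤ a ∧ a ≤ ξ j m ω ∧
      ‖blk (ξ j) (U j) 0 m ω + a • U j m ω - blk (ξ j) (U j) 0 (m + 2 + n) ω‖ < ρ} ≤
    ENNReal.ofReal (4 / ρ) * (μ {ω | ∑ i ∈ Finset.range m, ξ j i ω ≤ T} * bnd (2 * ρ) (n + 1)) := by
  have h1 := hit_prob h j m (V := U j m) (Z := fun ω => -blk (ξ j) (U j) (m+1) (m+2+n) ω)
    (θ := fun ω => ∑ i ∈ Finset.range m, ξ j i ω) (A := Set.Iic T) measurableSet_Iic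
    (meas_U (by simp)) (meas_blk (SB_sub_compl (by omega))).neg (meas_theta (SB_sub_compl (by omega)))
    (ae_normU h _ _) hρ hρ2
  have h2 := theta_blk h j m n T (show 0 < 2 * ρ by positivity)
  refine (measure_mono ?_).trans (h1.trans (mul_le_mul_right ((measure_mono ?_).trans h2) _))
  · rintro ω ⟨h3, a, h4, h5, h6⟩
    refine ⟨h3, ξ j m ω - a, by linarith, by linarith, ?_⟩
    rw [← blk_add (show 0 ≤ m by omega) (show m ≤ m + 2 + n by omega),
      ← blk_add (show m ≤ m + 1 by omega) (show m + 1 ≤ m + 2 + n by omega), blk_one] at h6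
    convert h6 using 1
    rw [← norm_neg]
    congr 1
    module
  · rintro ω ⟨h3, h4⟩
    refine ⟨h3, ?_⟩
    rw [← blk_add (show m ≤ m + 1 by omega) (show m + 1 ≤ m + 2 + n by omega), blk_one]
    convert h4 using 2
    abel

lemma pair_hit (h : FlightHyp μ μS N ξ U v) {i j : Fin N} (hij : i ≠ j) (m k : ℕ) (T : ℝ) {ρ : ℝ}
    (hρ : 0 < ρ) (hρ2 : ρ ≤ 2) :
    μ {ω | ∑ l ∈ Finset.range (k+1), ξ j l ω ≤ T ∧ ∃ a, 0 ≤ a ∧ a ≤ ξ i m ω ∧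
      ‖blk (ξ i) (U i) 0 m ω + a • U i m ω - blk (ξ j) (U j) 0 (k + 1) ω‖ < ρ} ≤
    ENNReal.ofReal (4 / ρ) * μ {ω | ∑ l ∈ Finset.range (k+1), ξ j l ω ≤ T ∧
      ‖blk (ξ i) (U i) 0 (m+1) ω - blk (ξ j) (U j) 0 (k + 1) ω‖ < 2 * ρ} := by
  have h1 := hit_prob h i m (V := U i m) (Z := fun ω => blk (ξ j) (U j) 0 (k+1) ω - blk (ξ i) (U i) 0 m ω)
    (θ := fun ω => ∑ l ∈ Finset.range (k+1), ξ j l ω) (A := Set.Iic T) measurableSet_Iic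
    (meas_U (by simp)) ((meas_blk (SB_sub_compl (Or.inl hij.symm))).sub (meas_blk (SB_sub_compl (by omega))))
    (meas_theta (SB_sub_compl (Or.inl hij.symm)))
    (ae_normU h _ _) hρ hρ2
  refine (measure_mono ?_).trans (h1.trans (mul_le_mul_right (measure_mono ?_) _))
  · rintro ω ⟨h3, a, h4, h5, h6⟩
    refine ⟨h3, a, h4, h5, ?_⟩
    convert h6 using 2
    abel
  · rintro ω ⟨h3, h4⟩
    refine ⟨h3, ?_⟩
    rw [blk_succ (show 0 ≤ m by omega)]
    convert h4 using 2
    abel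

lemma pair_11 (h : FlightHyp μ μS N ξ U v) {i j : Fin N} (hij : i ≠ j) {w : ℝ} (hw : 0 < w)
    (hwle : w ≤ 2 * arcsin (√((1 - ⟪v i, v j⟫_ℝ) / 2))) {ε : ℝ} (hε : 0 < ε) :
    μ {ω | ‖blk (ξ i) (U i) 0 1 ω - blk (ξ j) (U j) 0 1 ω‖ < ε} ≤ ENNReal.ofReal (4 * π * ε ^ 2 / w) := by
  have := h.pr
  have h1 : IndepFun (ξ i 0) (ξ j 0) μ :=
      h.indep (S := {Sum.inl (i, 0)}) (T := {Sum.inl (j, 0)}) (meas_xi rfl) (meas_xi rfl)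
        (by simpa using hij)
  have l := (indepFun_iff_map_prod_eq_prod_map_map (h.mξ _ _).aemeasurable
      (h.mξ _ _).aemeasurable).mp h1
  rw [h.lξ, h.lξ] at l
  have h2 := one_one (v i) (v j) (h.hv i) (h.hv j) hε hw hwle
  rw [← l, Measure.map_apply ((h.mξ _ _).prodMk (h.mξ _ _))
    (measurableSet_lt (by fun_prop) measurable_const)] at h2
  refine (measure_mono ?_).trans h2
  intro ω hω
  have hω' : ‖blk (ξ i) (U i) 0 1 ω - blk (ξ j) (U j) 0 1 ω‖ < ε := hω
  simpa [blk, h.hU0] using hω'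

lemma pair_i (h : FlightHyp μ μS N ξ U v) {i j : Fin N} (hij : i ≠ j) (n k : ℕ) (T : ℝ) {ε : ℝ}
    (hε : 0 < ε) :
    μ {ω | ∑ l ∈ Finset.range (k+1), ξ j l ω ≤ T ∧
      ‖blk (ξ i) (U i) 0 (n+2) ω - blk (ξ j) (U j) 0 (k + 1) ω‖ < ε} ≤
    μ {ω | ∑ l ∈ Finset.range (k+1), ξ j l ω ≤ T} * bnd ε (n + 1) := by
  have := h.pr
  have mY : Measurable[FsF ξ U (SB j 0 (k+1))]
    (fun ω => (∑ l ∈ Finset.range (k+1), ξ j l ω, blk (ξ j) (U j) 0 (k+1) ω)) :=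
    (meas_theta le_rfl).prodMk (meas_blk le_rfl)
  have hi := h.indep (Y := blk (ξ i) (U i) 0 (n+2)) mY (meas_blk le_rfl) (SB_disj' hij.symm)
  have mB : MeasurableSet {p : (ℝ × E3) × E3 | ‖p.2 - p.1.2‖ < ε} :=
    measurableSet_lt (by fun_prop) measurable_const
  exact cond_le (mY.mono (Fs_le h _) le_rfl) (meas_blk' h i _ _) hi (measurable_fst measurableSet_Iic) mB
    (c := bnd ε (n + 1)) (fun y => by simpa [add_comm] using blk_conc h i 0 n y.2 hε)

lemma pair_j (h : FlightHyp μ μS N ξ U v) {i j : Fin N} (hij : i ≠ j) (m n : ℕ) {ε : ℝ}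
    (hε : 0 < ε) :
    μ {ω | ‖blk (ξ i) (U i) 0 m ω - blk (ξ j) (U j) 0 (n + 2) ω‖ < ε} ≤ bnd ε (n + 1) := by
  have := h.pr
  have hi := h.indep (X := blk (ξ i) (U i) 0 m) (Y := blk (ξ j) (U j) 0 (n+2)) (meas_blk le_rfl)
    (meas_blk le_rfl) (SB_disj' hij)
  have mB : MeasurableSet {p : E3 × E3 | ‖p.1 - p.2‖ < ε} :=
    measurableSet_lt (by fun_prop) measurable_const
  have h1 := cond_le (meas_blk' h i _ _) (meas_blk' h j _ _) hi MeasurableSet.univ mB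
    (c := bnd ε (n + 1)) (fun y => by simpa [add_comm, norm_sub_rev] using blk_conc h j 0 n y hε)
  simpa using h1

lemma self_total (h : FlightHyp μ μS N ξ U v) (j : Fin N) {T : ℝ} (hT : 1 ≤ T) {r : ℝ} (hr : 0 < r)
    (hr1 : r ≤ 1) :
    μ {ω | ∃ k m, (k + 1 ≤ m ∨ m + 2 ≤ k) ∧ ∑ i ∈ Finset.range (min k m), ξ j i ω ≤ T ∧
      ∃ a, 0 ≤ a ∧ a ≤ ξ j m ω ∧
      ‖blk (ξ j) (U j) 0 m ω + a • U j m ω - blk (ξ j) (U j) 0 k ω‖ < 2 * r} ≤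
      ENNReal.ofReal (128 * Kb * exp 1 * (r * T)) := by
  set p : ℕ → ℝ≥0∞ := fun k => μ {ω | ∑ i ∈ Finset.range k, ξ j i ω ≤ T} with hp
  set c : ℕ → ℕ → ℝ≥0∞ := fun k n => ENNReal.ofReal (4 / (2 * r)) * (p k * bnd (2 * (2 * r)) (n + 1)) with hc
  have hsum : ∑' k, ∑' n, c k n ≤ ENNReal.ofReal (64 * Kb * exp 1 * (r * T)) := by
    simp only [hc, ENNReal.tsum_mul_left]
    rw [ENNReal.tsum_mul_right]
    have e1 : ∑' n, bnd (2 * (2 * r)) (n + 1) ≤ ENNReal.ofReal (Kb * (2 * (2 * r)) ^ 2) := by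
      refine le_trans ?_ (b1_le (ε := 2 * (2 * r)) (by positivity) (by linarith))
      have : ∀ n, bnd (2 * (2 * r)) (n + 1) = b1 (2 * (2 * r)) (n + 1) := by
        intro n; simp [b1]
      simp_rw [this]
      exact ENNReal.tsum_comp_le_tsum_of_injective (add_left_injective 1) _
    have e2 : ∑' k, p k ≤ _ := theta_sum h j hT
    have hk := Kb_nonneg
    calc _ ≤ ENNReal.ofReal (4 / (2 * r)) * (ENNReal.ofReal (2 * exp 1 * T) * ENNReal.ofReal (Kb * (2 * (2 * r)) ^ 2)) := by
          gcongr
      _ = _ := by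
          rw [← ENNReal.ofReal_mul (by positivity), ← ENNReal.ofReal_mul (by positivity)]
          congr 1; field_simp; ring
  calc _ ≤ μ ((⋃ k, ⋃ n, {ω | ∑ i ∈ Finset.range k, ξ j i ω ≤ T ∧ ∃ a, 0 ≤ a ∧ a ≤ ξ j (k + 1 + n) ω ∧
      ‖blk (ξ j) (U j) 0 (k + 1 + n) ω + a • U j (k + 1 + n) ω - blk (ξ j) (U j) 0 k ω‖ < 2 * r}) ∪
      (⋃ m, ⋃ n, {ω | ∑ i ∈ Finset.range m, ξ j i ω ≤ T ∧ ∃ a, 0 ≤ a ∧ a ≤ ξ j m ω ∧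
      ‖blk (ξ j) (U j) 0 m ω + a • U j m ω - blk (ξ j) (U j) 0 (m + 2 + n) ω‖ < 2 * r})) := by
        apply measure_mono
        rintro ω ⟨k, m, hkm, h1, h2⟩
        rcases hkm with hkm | hkm
        · left
          obtain ⟨n, rfl⟩ := Nat.exists_eq_add_of_le hkm
          rw [min_eq_left (by omega)] at h1
          exact Set.mem_iUnion₂.mpr ⟨k, n, h1, h2⟩
        · right
          obtain ⟨n, rfl⟩ := Nat.exists_eq_add_of_le hkm
          rw [min_eq_right (by omega)] at h1
          exact Set.mem_iUnion₂.mpr ⟨m, n, h1, h2⟩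
    _ ≤ (∑' k, ∑' n, c k n) + (∑' k, ∑' n, c k n) := by
        refine (measure_union_le _ _).trans (add_le_add ?_ ?_)
        · refine (measure_iUnion_le _).trans (ENNReal.tsum_le_tsum fun k => (measure_iUnion_le _).trans
            (ENNReal.tsum_le_tsum fun n => self_fwd h j k n T (by positivity) (by linarith)))
        · refine (measure_iUnion_le _).trans (ENNReal.tsum_le_tsum fun k => (measure_iUnion_le _).trans
            (ENNReal.tsum_le_tsum fun n => self_bwd h j k n T (by positivity) (by linarith)))
    _ ≤ _ := by
        refine (add_le_add hsum hsum).trans ?_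
        have hk := Kb_nonneg
        rw [← ENNReal.ofReal_add (by positivity) (by positivity)]
        apply ENNReal.ofReal_le_ofReal
        linarith

lemma pair_total (h : FlightHyp μ μS N ξ U v) {i j : Fin N} (hij : i ≠ j) {w : ℝ} (hw : 0 < w)
    (hwle : w ≤ 2 * arcsin (√((1 - ⟪v i, v j⟫_ℝ) / 2))) {T : ℝ} (hT : 1 ≤ T) {r : ℝ} (hr : 0 < r)
    (hr1 : r ≤ 1) (hrT : r * T ≤ 1) :
    μ {ω | ∃ m k, ∑ l ∈ Finset.range (k+1), ξ j l ω ≤ T ∧ ∃ a, 0 ≤ a ∧ a ≤ ξ i m ω ∧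
      ‖blk (ξ i) (U i) 0 m ω + a • U i m ω - blk (ξ j) (U j) 0 (k + 1) ω‖ < 2 * r} ≤
      ENNReal.ofReal (π * (128 + 160 * Kb + 256 * Kb * exp 1) * r * w⁻¹) := by
  have hpr := h.pr
  have hk := Kb_nonneg
  set ε := 2 * (2 * r) with hε
  have hε0 : 0 < ε := by positivity
  have hε4 : ε ≤ 4 := by linarith
  set p : ℕ → ℝ≥0∞ := fun k => μ {ω | ∑ i ∈ Finset.range k, ξ j i ω ≤ T} with hp
  set c : ℝ≥0∞ := ENNReal.ofReal (4 * π * ε ^ 2 / w) with hc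
  set q : ℕ → ℕ → ℝ≥0∞ := fun m k => μ {ω | ∑ l ∈ Finset.range (k+1), ξ j l ω ≤ T ∧
      ‖blk (ξ i) (U i) 0 (m+1) ω - blk (ξ j) (U j) 0 (k + 1) ω‖ < ε} with hq
  let δ : ℕ → ℝ≥0∞ := fun k => if k = 0 then 1 else 0
  let χ : ℕ → ℝ≥0∞ := fun k => if k < 4 then 1 else 0
  have hδ : ∑' k, δ k = 1 := tsum_ite_eq 0 _
  have hχ : ∑' k, χ k = 4 := by
    rw [tsum_eq_sum (s := Finset.range 4) (by intro b hb; simp only [Finset.mem_range] at hb; simp [χ, hb])]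
    simp only [Finset.sum_range_succ, χ, Finset.sum_range_zero]; norm_num
  have hqi : ∀ n k, q (n+1) k ≤ p (k+1) * bnd ε (n+1) := fun n k => pair_i h hij n k T hε0
  have hqj : ∀ m n, q m (n+1) ≤ bnd ε (n+1) := fun m n =>
    (measure_mono fun ω hω => hω.2).trans (pair_j h hij (m+1) n hε0)
  have hq0 : q 0 0 ≤ c := (measure_mono fun ω hω => hω.2).trans (pair_11 h hij hw hwle hε0)
  have hqle : ∀ m k, q m k ≤ c * (δ m * δ k) + b1 ε m * δ k + χ m * b1 ε k + b4 ε m * p (k+1) := by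
    intro m k
    rcases Nat.lt_or_ge m 4 with hm | hm
    · rcases k with _ | k
      · rcases m with _ | m
        · refine hq0.trans ?_
          simp only [δ, if_true, mul_one]
          rw [add_assoc, add_assoc]; exact le_self_add
        · refine (hqi m 0).trans ?_
          calc _ ≤ 1 * bnd ε (m+1) := by gcongr; exact prob_le_one
            _ ≤ b1 ε (m+1) * δ 0 := by simp [b1, δ]
            _ ≤ _ := by
              rw [add_assoc, add_assoc]
              exact le_add_left le_self_add
      · refine (hqj m k).trans ?_
        calc _ ≤ χ m * b1 ε (k+1) := by simp [b1, χ, hm]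
          _ ≤ _ := by
            rw [add_assoc]
            exact le_add_left le_self_add
    · obtain ⟨n, rfl⟩ : ∃ n, m = n + 1 := ⟨m - 1, by omega⟩
      refine (hqi n k).trans ?_
      calc _ ≤ b4 ε (n+1) * p (k+1) := by simp [b4, hm, mul_comm]
        _ ≤ _ := le_add_self
  have hsum : ∑' m, ∑' k, q m k ≤ c + ENNReal.ofReal (5 * Kb * ε ^ 2 + 2 * exp 1 * Kb * T * ε ^ 3) := by
    calc _ ≤ ∑' m, ∑' k, (c * (δ m * δ k) + b1 ε m * δ k + χ m * b1 ε k + b4 ε m * p (k+1)) :=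
          ENNReal.tsum_le_tsum fun m => ENNReal.tsum_le_tsum fun k => hqle m k
      _ = c + (∑' m, b1 ε m) + 4 * (∑' m, b1 ε m) + (∑' m, b4 ε m) * ∑' k, p (k+1) := by
          simp only [ENNReal.tsum_add, ENNReal.tsum_mul_left, ENNReal.tsum_mul_right, hδ, hχ, mul_one]
      _ ≤ c + ENNReal.ofReal (Kb * ε ^ 2) + ENNReal.ofReal 4 * ENNReal.ofReal (Kb * ε ^ 2) +
          ENNReal.ofReal (Kb * ε ^ 3) * ENNReal.ofReal (2 * exp 1 * T) := by
          have e1 := b1_le hε0 hε4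
          have e2 := b4_le hε0
          have e3 : ∑' k, p (k+1) ≤ ENNReal.ofReal (2 * exp 1 * T) :=
            (ENNReal.tsum_comp_le_tsum_of_injective (add_left_injective 1) p).trans (theta_sum h j hT)
          have e4 : (4 : ℝ≥0∞) = ENNReal.ofReal 4 := by simp
          rw [e4]
          gcongr
      _ = _ := by
          rw [← ENNReal.ofReal_mul (by positivity), ← ENNReal.ofReal_mul (by positivity), add_assoc,
            add_assoc, ← ENNReal.ofReal_add (by positivity) (by positivity),
            ← ENNReal.ofReal_add (by positivity) (by positivity)]
          congr 2; ring
  calc _ ≤ μ (⋃ m, ⋃ k, {ω | ∑ l ∈ Finset.range (k+1), ξ j l ω ≤ T ∧ ∃ a, 0 ≤ a ∧ a ≤ ξ i m ω ∧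
      ‖blk (ξ i) (U i) 0 m ω + a • U i m ω - blk (ξ j) (U j) 0 (k + 1) ω‖ < 2 * r}) := by
        apply measure_mono
        rintro ω ⟨m, k, h1⟩
        exact Set.mem_iUnion₂.mpr ⟨m, k, h1⟩
    _ ≤ ∑' m, ∑' k, ENNReal.ofReal (4 / (2 * r)) * q m k :=
        (measure_iUnion_le _).trans (ENNReal.tsum_le_tsum fun m => (measure_iUnion_le _).trans
            (ENNReal.tsum_le_tsum fun k => pair_hit h hij m k T (by positivity) (by linarith)))
    _ ≤ ENNReal.ofReal (4 / (2 * r)) * (c + ENNReal.ofReal (5 * Kb * ε ^ 2 + 2 * exp 1 * Kb * T * ε ^ 3)) := by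
        simp only [ENNReal.tsum_mul_left]
        gcongr
    _ ≤ _ := by
        rw [hc, ← ENNReal.ofReal_add (by positivity) (by positivity), ← ENNReal.ofReal_mul (by positivity)]
        apply ENNReal.ofReal_le_ofReal
        have hwpi : w ≤ π := by
          have := arcsin_le_pi_div_two (√((1 - ⟪v i, v j⟫_ℝ) / 2))
          linarith
        have h1 : 1 ≤ π * w⁻¹ := by
          rw [← div_eq_mul_inv, one_le_div hw]; exact hwpi
        have h2 : 4 / (2 * r) * (4 * π * ε ^ 2 / w + (5 * Kb * ε ^ 2 + 2 * exp 1 * Kb * T * ε ^ 3)) =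
          128 * π * r * w⁻¹ + r * (160 * Kb + 256 * Kb * exp 1 * (r * T)) := by
          rw [hε]; field_simp; ring
        rw [h2]
        have h3 : r * (160 * Kb + 256 * Kb * exp 1 * (r * T)) ≤ r * (160 * Kb + 256 * Kb * exp 1 * 1) := by
          gcongr
        have h4 : r * (160 * Kb + 256 * Kb * exp 1 * 1) ≤ (π * w⁻¹) * (r * (160 * Kb + 256 * Kb * exp 1 * 1)) :=
          le_mul_of_one_le_left (by positivity) h1
        calc _ ≤ 128 * π * r * w⁻¹ + (π * w⁻¹) * (r * (160 * Kb + 256 * Kb * exp 1 * 1)) := by linarith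
          _ = _ := by ring
end

section
variable {Ω : Type} [mΩ : MeasurableSpace Ω] {μ : Measure Ω} {μS : Measure E3} {N : ℕ}
    {ξ : Fin N → ℕ → Ω → ℝ} {U : Fin N → ℕ → Ω → E3} {v : Fin N → E3}

lemma ae_pos (h : FlightHyp μ μS N ξ U v) : ∀ᵐ ω ∂μ, ∀ j k, 0 < ξ j k ω := by
  rw [ae_all_iff]; intro j
  rw [ae_all_iff]; intro k
  have h1 : ∀ᵐ x ∂Ex, 0 < x := by
    rw [ae_iff]
    have : {x : ℝ | ¬ 0 < x} = Set.Iic 0 := by ext; simp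
    rw [this]; exact Ex_Iic_zero
  rw [← h.lξ j k] at h1
  exact ae_of_ae_map (h.mξ j k).aemeasurable h1

lemma ae_div (h : FlightHyp μ μS N ξ U v) :
    ∀ᵐ ω ∂μ, ∀ j, ∀ M : ℝ, ∃ k, M < ∑ i ∈ Finset.range k, ξ j i ω := by
  rw [ae_all_iff]; intro j
  have h1 : ∀ᵐ ω ∂μ, ∀ n : ℕ, ∃ k, (n : ℝ) + 1 < ∑ i ∈ Finset.range k, ξ j i ω := by
    rw [ae_all_iff]; intro n
    have := ae_eventually_notMem (μ := μ) (s := fun k => {ω | ∑ i ∈ Finset.range k, ξ j i ω ≤ (n : ℝ) + 1})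
      ((theta_sum h j (by linarith [n.cast_nonneg (α := ℝ)])).trans_lt ENNReal.ofReal_lt_top).ne
    filter_upwards [this] with ω hω
    obtain ⟨k, hk⟩ := hω.exists
    exact ⟨k, by simpa using hk⟩
  filter_upwards [h1] with ω hω M
  obtain ⟨n, hn⟩ := exists_nat_gt M
  obtain ⟨k, hk⟩ := hω n
  exact ⟨k, by linarith⟩

lemma ae_short (h : FlightHyp μ μS N ξ U v) (j : Fin N) {a : ℝ} (ha : 0 < a) :
    ∀ᵐ ω ∂μ, ∃ k, ξ j (k + 1) ω < a := by
  have := h.pr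
  let g : ℝ → ℝ≥0∞ := (Set.Ici a).indicator 1
  have mg : Measurable g := measurable_one.indicator measurableSet_Ici
  have hq : ∫⁻ x, g x ∂Ex ≤ ENNReal.ofReal (exp (-a)) := by
    rw [lintegral_indicator_one measurableSet_Ici]; exact Ex_Ici_le ha.le
  have hm : ∀ n, Measurable (fun ω => ∏ l ∈ Finset.range n, g (ξ j (l + 1) ω)) := fun n =>
    Finset.measurable_prod _ fun l _ => mg.comp (h.mξ _ _)
  have h1 : ∀ n, ∫⁻ ω, ∏ l ∈ Finset.range n, g (ξ j (l + 1) ω) ∂μ ≤ ENNReal.ofReal (exp (-a)) ^ n := by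
    intro n
    induction n with
    | zero => simp
    | succ n ih =>
      have mX : Measurable[FsF ξ U (SB j 0 (n+1))] (fun ω => ∏ l ∈ Finset.range n, g (ξ j (l + 1) ω)) :=
        Finset.measurable_prod _ fun l hl => mg.comp (meas_xi (by
          rw [Finset.mem_range] at hl; simp [SB, ixF, hl]))
      have mY : Measurable[FsF ξ U (SB j (n+1) (n+2))] (fun ω => g (ξ j (n + 1) ω)) :=
        mg.comp (meas_xi (by simp [SB, ixF]))
      have hi := h.indep mX mY (SB_disj le_rfl)
      have e := lintegral_mul_eq_lintegral_mul_lintegral_of_indepFun (hm n) (mg.comp (h.mξ j (n+1))) hi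
      simp only [Pi.mul_apply, Function.comp] at e
      simp only [Finset.prod_range_succ]
      have e2 : ∫⁻ ω, g (ξ j (n+1) ω) ∂μ = ∫⁻ x, g x ∂Ex := by
        rw [← h.lξ j (n+1), lintegral_map mg (h.mξ _ _)]
      rw [e, e2, pow_succ]
      exact mul_le_mul' ih hq
  rw [ae_iff]
  have h2 : ∀ n, μ {ω | ¬ ∃ k, ξ j (k + 1) ω < a} ≤ ENNReal.ofReal (exp (-a)) ^ n := by
    intro n
    refine le_trans ?_ (h1 n)
    have h3 : MeasurableSet {ω | ¬ ∃ k, ξ j (k + 1) ω < a} := by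
      have : {ω | ¬ ∃ k, ξ j (k + 1) ω < a} = ⋂ k, {ω | a ≤ ξ j (k+1) ω} := by
        ext ω; simp
      rw [this]
      exact MeasurableSet.iInter fun k => measurableSet_le measurable_const (h.mξ _ _)
    rw [← lintegral_indicator_one h3]
    refine lintegral_mono fun ω => ?_
    by_cases hω : ω ∈ {ω | ¬ ∃ k, ξ j (k + 1) ω < a}
    · rw [Set.indicator_of_mem hω]
      have h4 : ∀ l, g (ξ j (l+1) ω) = 1 := by
        intro l
        have h5 : ¬ ∃ k, ξ j (k + 1) ω < a := hω
        push Not at h5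
        exact Set.indicator_of_mem (show ξ j (l+1) ω ∈ Set.Ici a from h5 l) _
      simp [h4]
    · rw [Set.indicator_of_notMem hω]; exact zero_le
  have h5 : Filter.Tendsto (fun n : ℕ => ENNReal.ofReal (exp (-a)) ^ n) Filter.atTop (nhds 0) := by
    apply ENNReal.tendsto_pow_atTop_nhds_zero_of_lt_one
    rw [ENNReal.ofReal_lt_one]
    simpa using ha
  exact le_antisymm (ge_of_tendsto' h5 h2) zero_le
end

lemma theta_mono {Ω : Type} {ξ : ℕ → Ω → ℝ} {ω : Ω} (hpos : ∀ k, 0 < ξ k ω) :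
    StrictMono (fun k => flightTheta ξ k ω) := by
  apply strictMono_nat_of_lt_succ
  intro n
  simp only [flightTheta, Finset.sum_range_succ]
  linarith [hpos n]

lemma theta_succ {Ω : Type} {ξ : ℕ → Ω → ℝ} {ω : Ω} (m : ℕ) :
    flightTheta ξ (m+1) ω = flightTheta ξ m ω + ξ m ω := by
  simp only [flightTheta, Finset.sum_range_succ]

lemma pos_eq {Ω : Type} (ξ : ℕ → Ω → ℝ) (U : ℕ → Ω → E3) (k : ℕ) (ω : Ω) :
    flightPos ξ U k ω = blk ξ U 0 k ω := by
  unfold flightPos blk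
  rw [Finset.range_eq_Ico]

lemma traj_eq {Ω : Type} {ξ : ℕ → Ω → ℝ} {U : ℕ → Ω → E3} {ω : Ω} (hpos : ∀ k, 0 < ξ k ω)
    {m : ℕ} {s : ℝ} (h1 : flightTheta ξ m ω ≤ s) (h2 : s < flightTheta ξ (m+1) ω) :
    flightTraj ξ U s ω = blk ξ U 0 m ω + (s - flightTheta ξ m ω) • U m ω := by
  have hm := theta_mono hpos
  have : {k : ℕ | flightTheta ξ k ω ≤ s} = Set.Iic m := by
    ext k
    simp only [Set.mem_setOf_eq, Set.mem_Iic]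
    constructor
    · intro hk
      have := hm.lt_iff_lt.mp (hk.trans_lt h2)
      omega
    · intro hk
      exact (hm.monotone hk).trans h1
  unfold flightTraj
  rw [this, csSup_Iic, pos_eq]

lemma exists_seg {Ω : Type} {ξ : ℕ → Ω → ℝ} {ω : Ω} 
    (hdiv : ∀ M : ℝ, ∃ k, M < ∑ i ∈ Finset.range k, ξ i ω) {s : ℝ} (hs : 0 ≤ s) :
    ∃ m, flightTheta ξ m ω ≤ s ∧ s < flightTheta ξ (m+1) ω := by
  classical
  have hex : ∃ k, s < flightTheta ξ k ω := hdiv s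
  have h0 : Nat.find hex ≠ 0 := by
    intro h
    have := Nat.find_spec hex
    rw [h] at this
    simp [flightTheta] at this
    linarith
  obtain ⟨m, hm⟩ := Nat.exists_eq_succ_of_ne_zero h0
  refine ⟨m, not_lt.mp (Nat.find_min hex (by omega)), ?_⟩
  have := Nat.find_spec hex
  rwa [hm] at this

lemma determ {Ω : Type} {N : ℕ} {ξ : Fin N → ℕ → Ω → ℝ} {U : Fin N → ℕ → Ω → E3} {ω : Ω} (j0 : Fin N)
    {r T : ℝ} (hpos : ∀ j k, 0 < ξ j k ω) (hn : ∀ j k, ‖U j k ω‖ = 1)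
    (hdiv : ∀ j, ∀ M : ℝ, ∃ k, M < ∑ i ∈ Finset.range k, ξ j i ω)
    (hsh : ∃ k, ξ j0 (k + 1) ω < 2 * r) (hlt : mismatchTime N ξ U r ω < T) :
    (∃ j, ∃ k m, (k + 1 ≤ m ∨ m + 2 ≤ k) ∧ ∑ i ∈ Finset.range (min k m), ξ j i ω ≤ T ∧
      ∃ a, 0 ≤ a ∧ a ≤ ξ j m ω ∧
      ‖blk (ξ j) (U j) 0 m ω + a • U j m ω - blk (ξ j) (U j) 0 k ω‖ < 2 * r) ∨
    (∃ i j, i ≠ j ∧ ∃ m k, ∑ l ∈ Finset.range (k+1), ξ j l ω ≤ T ∧ ∃ a, 0 ≤ a ∧ a ≤ ξ i m ω ∧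
      ‖blk (ξ i) (U i) 0 m ω + a • U i m ω - blk (ξ j) (U j) 0 (k + 1) ω‖ < 2 * r) := by
  letI : MeasurableSpace Ω := ⊤
  unfold mismatchTime at hlt
  obtain ⟨t, ⟨ht, i, j, k, hk, hkt, s, hs, hst, hdist, hij⟩, htT⟩ := exists_lt_of_csInf_lt (by
    obtain ⟨k, hk⟩ := hsh
    have hmono := theta_mono (hpos j0)
    set δ := min (ξ j0 (k+2) ω) (2 * r - ξ j0 (k+1) ω) / 2 with hδ
    have hmin : 0 < min (ξ j0 (k+2) ω) (2 * r - ξ j0 (k+1) ω) := lt_min (hpos _ _) (by linarith)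
    have hδ0 : 0 < δ := by positivity
    have hδ1 : δ < ξ j0 (k+2) ω := by
      have := min_le_left (ξ j0 (k+2) ω) (2 * r - ξ j0 (k+1) ω); linarith
    have hδ2 : δ < 2 * r - ξ j0 (k+1) ω := by
      have := min_le_right (ξ j0 (k+2) ω) (2 * r - ξ j0 (k+1) ω); linarith
    have hθ0 : 0 ≤ flightTheta (ξ j0) (k+2) ω := Finset.sum_nonneg fun l _ => (hpos _ _).le
    have h1 := theta_succ (ξ := ξ j0) (ω := ω) (k+2)
    have hle : flightTheta (ξ j0) (k+1) ω ≤ flightTheta (ξ j0) (k+2) ω := hmono.monotone (by omega)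
    refine ⟨flightTheta (ξ j0) (k+2) ω + δ, by linarith, j0, j0, k+1, by omega, by linarith,
      flightTheta (ξ j0) (k+2) ω + δ, by linarith, le_rfl, ?_, fun _ => Or.inr (by
        show flightTheta (ξ j0) (k+2) ω < _
        linarith)⟩
    rw [traj_eq (hpos j0) (m := k+2) (by linarith) (by linarith), pos_eq, blk_succ (by omega : 0 ≤ k + 1)]
    have e : blk (ξ j0) (U j0) 0 (k + 1) ω + ξ j0 (k + 1) ω • U j0 (k + 1) ω +
        (flightTheta (ξ j0) (k + 2) ω + δ - flightTheta (ξ j0) (k + 2) ω) • U j0 (k + 2) ω -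
        blk (ξ j0) (U j0) 0 (k + 1) ω = ξ j0 (k + 1) ω • U j0 (k + 1) ω + δ • U j0 (k + 2) ω := by
      module
    rw [e]
    calc _ ≤ ‖ξ j0 (k + 1) ω • U j0 (k + 1) ω‖ + ‖δ • U j0 (k + 2) ω‖ := norm_add_le _ _
      _ = ξ j0 (k+1) ω + δ := by
        rw [norm_smul, norm_smul, hn, hn, Real.norm_of_nonneg (hpos _ _).le,
          Real.norm_of_nonneg hδ0.le, mul_one, mul_one]
      _ < _ := by linarith) hlt
  obtain ⟨m, hm1, hm2⟩ := exists_seg (hdiv i) hs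
  rw [traj_eq (hpos i) hm1 hm2, pos_eq] at hdist
  have hmono := theta_mono (hpos i)
  have hseg : s - flightTheta (ξ i) m ω ≤ ξ i m ω := by
    have := theta_succ (ξ := ξ i) (ω := ω) m; linarith
  by_cases h : i = j
  · left
    subst h
    rcases hij rfl with h1 | h1
    · have h2 : m < k - 1 := hmono.lt_iff_lt.mp (hm1.trans_lt h1)
      refine ⟨i, k, m, Or.inr (by omega), ?_, s - flightTheta (ξ i) m ω, by linarith, hseg, hdist⟩
      rw [min_eq_right (by omega)]
      exact hm1.trans (by linarith)
    · have h2 : k + 1 < m + 1 := hmono.lt_iff_lt.mp (h1.trans hm2)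
      refine ⟨i, k, m, Or.inl (by omega), ?_, s - flightTheta (ξ i) m ω, by linarith, hseg, hdist⟩
      rw [min_eq_left (by omega)]
      exact hkt.trans htT.le
  · right
    obtain ⟨k, rfl⟩ : ∃ k', k = k' + 1 := ⟨k - 1, by omega⟩
    exact ⟨i, j, h, m, k, hkt.trans htT.le, s - flightTheta (ξ i) m ω, by linarith, hseg, hdist⟩

/-- Proposition 1 of the paper (`d = 3`): for `N` independent Markovian flight processes with
deterministic initial unit velocities of minimal pairwise angle `w`, and `r ∈ (0,1]`,
`T ≥ 1` with `rT ≤ 1`, the first interference time `σ` satisfies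
`ℙ(σ < T) ≤ C r (N T + N² w⁻¹)` for a universal constant `C`. -/
theorem stmt16 :
    ∃ C : ℝ, 0 < C ∧
      ∀ (Ω : Type) (_ : MeasureSpace Ω) (_ : IsProbabilityMeasure (ℙ : Measure Ω))
        (μS : Measure (EuclideanSpace ℝ (Fin 3)))
        (_ : IsProbabilityMeasure μS)
        (_ : μS (Metric.sphere (0 : EuclideanSpace ℝ (Fin 3)) 1)ᶜ = 0)
        (_ : ∀ R : EuclideanSpace ℝ (Fin 3) ≃ₗᵢ[ℝ] EuclideanSpace ℝ (Fin 3),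
              μS.map R = μS)
        (N : ℕ) (_ : 2 ≤ N)
        (v : Fin N → EuclideanSpace ℝ (Fin 3)) (_ : ∀ j, ‖v j‖ = 1)
        (ξ : Fin N → ℕ → Ω → ℝ) (U : Fin N → ℕ → Ω → EuclideanSpace ℝ (Fin 3))
        (_ : ∀ j k, Measurable (ξ j k)) (_ : ∀ j k, Measurable (U j k))
        (_ : ∀ j, U j 0 = fun _ => v j)
        (_ : iIndepFun
          (m := fun i : (Fin N × ℕ) ⊕ (Fin N × ℕ) => Sum.rec
            (motive := fun i => MeasurableSpace
              (Sum.rec (motive := fun _ => Type) (fun _ => ℝ)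
                (fun _ => EuclideanSpace ℝ (Fin 3)) i))
            (fun _ => inferInstance) (fun _ => inferInstance) i)
          (fun i => Sum.rec
            (motive := fun i => Ω → Sum.rec (motive := fun _ => Type) (fun _ => ℝ)
              (fun _ => EuclideanSpace ℝ (Fin 3)) i)
            (fun p => ξ p.1 p.2) (fun p => U p.1 p.2) i) ℙ)
        (_ : ∀ j k, ∀ t : ℝ, 0 ≤ t →
          ℙ {ω | ξ j k ω ≤ t} = ENNReal.ofReal (1 - Real.exp (-t)))
        (_ : ∀ j, ∀ k : ℕ, 1 ≤ k → Measure.map (U j k) ℙ = μS)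
        (w : ℝ) (_ : 0 < w)
        (_ : w = sInf {x : ℝ | ∃ i j : Fin N, i < j ∧
              x = 2 * arcsin (√((1 - ⟪v i, v j⟫_ℝ) / 2))})
        (r T : ℝ), r ∈ Set.Ioc (0:ℝ) 1 → 1 ≤ T → r * T ≤ 1 →
          ℙ {ω | mismatchTime N ξ U r ω < T}
            ≤ ENNReal.ofReal (C * r * (N * T + N ^ 2 * w⁻¹)) := by
  have hK := Kb_nonneg
  refine ⟨128 * Kb * exp 1 + π * (128 + 160 * Kb + 256 * Kb * exp 1), by positivity, ?_⟩
  intro Ω _ hpr μS hprS hS hR N hN v hv ξ U mξ mU hU0 hind lξ lU w hw hwdef r T hr hT hrT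
  have h : FlightHyp (ℙ : Measure Ω) μS N ξ U v := by
    refine ⟨hpr, hprS, hS, hR, hv, mξ, mU, hU0, ?_, ?_, lU⟩
    · rw [iIndepFun_iff_iIndep] at hind
      convert hind using 1
      ext1 i
      rcases i with p | p <;> rfl
    · intro j k
      have := Measure.isProbabilityMeasure_map (μ := (ℙ : Measure Ω)) (mξ j k).aemeasurable
      apply Ex_unique
      intro t ht
      rw [Measure.map_apply (mξ j k) measurableSet_Iic]
      exact lξ j k t ht
  obtain ⟨hr0, hr1⟩ := hr
  have hw1 : ∀ i j : Fin N, i < j → w ≤ 2 * arcsin (√((1 - ⟪v i, v j⟫_ℝ) / 2)) := by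
    intro i j hij
    rw [hwdef]
    apply csInf_le
    · refine ⟨0, ?_⟩
      rintro x ⟨i, j, _, rfl⟩
      have := arcsin_nonneg.mpr (sqrt_nonneg ((1 - ⟪v i, v j⟫_ℝ) / 2))
      positivity
    · exact ⟨i, j, hij, rfl⟩
  have hw2 : ∀ i j : Fin N, i ≠ j → w ≤ 2 * arcsin (√((1 - ⟪v i, v j⟫_ℝ) / 2)) := by
    intro i j hij
    rcases lt_or_gt_of_ne hij with h1 | h1
    · exact hw1 i j h1
    · rw [real_inner_comm]; exact hw1 j i h1
  let j0 : Fin N := ⟨0, by omega⟩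
  have hnorm : ∀ᵐ ω ∂(ℙ : Measure Ω), ∀ j k, ‖U j k ω‖ = 1 := by
    rw [ae_all_iff]; intro j
    rw [ae_all_iff]; intro k
    exact ae_normU h j k
  let SA : Fin N → Set Ω := fun j => {ω | ∃ k m, (k + 1 ≤ m ∨ m + 2 ≤ k) ∧
      ∑ i ∈ Finset.range (min k m), ξ j i ω ≤ T ∧ ∃ a, 0 ≤ a ∧ a ≤ ξ j m ω ∧
      ‖blk (ξ j) (U j) 0 m ω + a • U j m ω - blk (ξ j) (U j) 0 k ω‖ < 2 * r}
  let PA : Fin N → Fin N → Set Ω := fun i j => {ω | i ≠ j ∧ ∃ m k,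
      ∑ l ∈ Finset.range (k+1), ξ j l ω ≤ T ∧ ∃ a, 0 ≤ a ∧ a ≤ ξ i m ω ∧
      ‖blk (ξ i) (U i) 0 m ω + a • U i m ω - blk (ξ j) (U j) 0 (k + 1) ω‖ < 2 * r}
  have hSA : ∀ j, (ℙ : Measure Ω) (SA j) ≤ ENNReal.ofReal (128 * Kb * exp 1 * (r * T)) :=
    fun j => self_total h j hT hr0 hr1
  have hPA : ∀ i j, (ℙ : Measure Ω) (PA i j) ≤
      ENNReal.ofReal (π * (128 + 160 * Kb + 256 * Kb * exp 1) * r * w⁻¹) := by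
    intro i j
    by_cases hij : i = j
    · have : PA i j = ∅ := by ext ω; simp [PA, hij]
      rw [this]; simp
    · exact (measure_mono fun ω hω => hω.2).trans (pair_total h hij hw (hw2 i j hij) hT hr0 hr1 hrT)
  calc (ℙ : Measure Ω) {ω | mismatchTime N ξ U r ω < T}
      ≤ (ℙ : Measure Ω) ((⋃ j, SA j) ∪ ⋃ i, ⋃ j, PA i j) := by
        apply measure_mono_ae
        filter_upwards [ae_pos h, hnorm, ae_div h, ae_short h j0 (show 0 < 2 * r by positivity)]
          with ω h1 h2 h3 h4 h5
        rcases determ j0 h1 h2 h3 h4 h5 with ⟨j, h6⟩ | ⟨i, j, h6, h7⟩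
        · exact Or.inl (Set.mem_iUnion.mpr ⟨j, h6⟩)
        · exact Or.inr (Set.mem_iUnion₂.mpr ⟨i, j, h6, h7⟩)
    _ ≤ (∑ j : Fin N, (ℙ : Measure Ω) (SA j)) + ∑ i : Fin N, ∑ j : Fin N, (ℙ : Measure Ω) (PA i j) := by
        refine (measure_union_le _ _).trans (add_le_add (measure_iUnion_fintype_le _ _) ?_)
        exact (measure_iUnion_fintype_le _ _).trans
          (Finset.sum_le_sum fun i _ => measure_iUnion_fintype_le _ _)
    _ ≤ (∑ _j : Fin N, ENNReal.ofReal (128 * Kb * exp 1 * (r * T))) +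
          ∑ _i : Fin N, ∑ _j : Fin N, ENNReal.ofReal (π * (128 + 160 * Kb + 256 * Kb * exp 1) * r * w⁻¹) :=
        add_le_add (Finset.sum_le_sum fun j _ => hSA j)
          (Finset.sum_le_sum fun i _ => Finset.sum_le_sum fun j _ => hPA i j)
    _ ≤ _ := by
        simp only [Finset.sum_const, Finset.card_univ, Fintype.card_fin, nsmul_eq_mul]
        rw [← ENNReal.ofReal_natCast, ← ENNReal.ofReal_mul (by positivity),
          ← ENNReal.ofReal_mul (by positivity), ← ENNReal.ofReal_mul (by positivity),
          ← ENNReal.ofReal_add (by positivity) (by positivity)]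
        apply ENNReal.ofReal_le_ofReal
        have e1 : 0 ≤ 128 * Kb * exp 1 * r * (N ^ 2 * w⁻¹) := by positivity
        have e2 : 0 ≤ π * (128 + 160 * Kb + 256 * Kb * exp 1) * r * (N * T) := by positivity
        nlinarith [e1, e2]
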